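/- Lower bound along a slanted cylinder: Let Y = (y,s) ∈ ℝ^{n+1} with s > 0, let r > 0, and suppose K⁻¹ r |y| ≤ s ≤ K r² for some constant K > 0. Let u ∈ C^{2,1} on the closure of the slanted cylinder V_r(Y) satisfy −u_t + Lu ≤ 0 and u > 0 at every point of V_r(Y), and suppose u ≥ ℓ on D_r := B_r(0) × {0} for some ℓ > 0. Then u ≥ C·ℓ on B_{r/2}(y) × {s}, and in particular u(y,s) ≥ C·ℓ, where C is a positive constant depending only on n, ν, S and K. -/

import Mathlib

open MeasureTheory ENNReal Metric Set RealInnerProductSpace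

noncomputable section

/-- `n`-dimensional Euclidean space. -/
abbrev En (n : ℕ) : Type := EuclideanSpace ℝ (Fin n)

variable {n : ℕ}

/-- Time derivative `u_t`. -/
def Dt (u : En n × ℝ → ℝ) (X : En n × ℝ) : ℝ :=
  deriv (fun t => u (X.1, t)) X.2

/-- First spatial derivative `D_i u`. -/
def Dx (u : En n × ℝ → ℝ) (i : Fin n) (X : En n × ℝ) : ℝ :=
  fderiv ℝ (fun x => u (x, X.2)) X.1 (EuclideanSpace.single i 1)

/-- Second spatial derivative `D_{ij} u`. -/
def Dxx (u : En n × ℝ → ℝ) (i j : Fin n) (X : En n × ℝ) : ℝ :=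
  Dx (Dx u j) i X

/-- `u` is of class `C^{2,1}` on `Q`: `u`, `D_i u`, `D_{ij} u`, `u_t` exist and are
continuous on `Q`. -/
structure IsC21 (u : En n × ℝ → ℝ) (Q : Set (En n × ℝ)) : Prop where
  cont : ContinuousOn u Q
  diff_t : ∀ X ∈ Q, DifferentiableAt ℝ (fun t => u (X.1, t)) X.2
  diff_x : ∀ X ∈ Q, DifferentiableAt ℝ (fun x => u (x, X.2)) X.1
  diff_xx : ∀ j : Fin n, ∀ X ∈ Q, DifferentiableAt ℝ (fun x => Dx u j (x, X.2)) X.1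
  cont_t : ContinuousOn (Dt u) Q
  cont_x : ∀ i, ContinuousOn (Dx u i) Q
  cont_xx : ∀ i j, ContinuousOn (Dxx u i j) Q

/-- Uniform parabolicity with constant `ν` on `Q`:
`ν⁻¹|ξ|² ≤ Σ a_ij ξ_i ξ_j` and `Σ a_ij² ≤ ν²`. -/
def UnifParabolic (ν : ℝ) (a : En n × ℝ → Matrix (Fin n) (Fin n) ℝ)
    (Q : Set (En n × ℝ)) : Prop :=
  ∀ X ∈ Q, (∀ ξ : Fin n → ℝ, ν⁻¹ * (∑ i, ξ i ^ 2) ≤ ∑ i, ∑ j, a X i j * ξ i * ξ j) ∧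
    (∑ i, ∑ j, (a X i j) ^ 2) ≤ ν ^ 2

/-- `Lu = Σ_{ij} a_ij D_ij u + Σ_i b_i D_i u`. -/
def Lop (a : En n × ℝ → Matrix (Fin n) (Fin n) ℝ) (b : En n × ℝ → En n)
    (u : En n × ℝ → ℝ) (X : En n × ℝ) : ℝ :=
  (∑ i, ∑ j, a X i j * Dxx u i j X) + ∑ i, b X i * Dx u i X

/-- `∫ (ess sup_t |f(x,t)|)ⁿ dx`, the `n`-th power of the `L^n_x L^∞_t` norm of `f`
over the set `Q ⊆ ℝⁿ × ℝ`. -/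
def LxnLtinfPow {E : Type*} [NNNorm E] (f : En n × ℝ → E) (Q : Set (En n × ℝ)) : ℝ≥0∞ :=
  ∫⁻ x, (essSup (fun t => (‖f (x, t)‖₊ : ℝ≥0∞)) (volume.restrict {t | (x, t) ∈ Q})) ^ n

/-- The `L^n_x L^∞_t` norm of `f` over `Q`. -/
def LxnLtinf {E : Type*} [NNNorm E] (f : En n × ℝ → E) (Q : Set (En n × ℝ)) : ℝ≥0∞ :=
  (LxnLtinfPow f Q) ^ (1 / (n : ℝ))

/-- The box `B_ρ(y) × (t₁, t₂)`. -/
def box (y : En n) (ρ t₁ t₂ : ℝ) : Set (En n × ℝ) := ball y ρ ×ˢ Ioo t₁ t₂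

/-- The standard parabolic cylinder `Q_r(Y) = B_r(y) × (s - r², s)`. -/
def pcyl (Y : En n × ℝ) (r : ℝ) : Set (En n × ℝ) := box Y.1 r (Y.2 - r ^ 2) Y.2

/-- The slanted cylinder `V_r(Y) = {(x,t) : |x - (t/s)y| < r, 0 < t < s}`. -/
def slantCyl (Y : En n × ℝ) (r : ℝ) : Set (En n × ℝ) :=
  {X | ‖X.1 - (X.2 / Y.2) • Y.1‖ < r ∧ 0 < X.2 ∧ X.2 < Y.2}

/-- Supremum of the positive part `u₊` over a set `A`. -/
def supPos (u : En n × ℝ → ℝ) (A : Set (En n × ℝ)) : ℝ :=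
  sSup ((fun X => max (u X) 0) '' A)

/-- `Ω` is a Lipschitz domain with character `(rΩ, mΩ)`: at every boundary point `y`
there is a coordinate frame, encoded by the unit "vertical" direction `e`, in which
`Ω ∩ B_{rΩ}(y)` is the region above the graph of an `mΩ`-Lipschitz function `φ`
of the tangential variables. -/
def IsLipschitzDomain (Ω : Set (En n)) (rΩ mΩ : ℝ) : Prop :=
  0 < rΩ ∧ 0 ≤ mΩ ∧
  ∀ y ∈ frontier Ω, ∃ (e : En n) (φ : En n → ℝ),
    ‖e‖ = 1 ∧ LipschitzWith (Real.toNNReal mΩ) φ ∧ φ 0 = 0 ∧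
    (∀ x, x ∈ Ω ∩ ball y rΩ ↔
      dist x y < rΩ ∧ φ ((x - y) - ⟪x - y, e⟫ • e) < ⟪x - y, e⟫) ∧
    (∀ ρ : ℝ, 0 < ρ → ρ ≤ rΩ → y + ρ • e ∈ Ω)

/-!
For a nonnegative supersolution `u` and a level `ℓ`, the function `v = log ((u + e^{-H} ℓ) / ℓ)` is
at least `-H` and satisfies the same inequality with an additional gain `|Dv|²`. Under `v`, minus an
affine function of time, slide the barriers `-φ (· - ξ)` with `φ y = b |y|^{2m+2} / (2m+2)`. If `v`
becomes too low at the end, the contact heights of all centres `ξ` in a small ball drop by `H / 2`.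
At each time the contact map `x ↦ x + (Dφ)⁻¹ (Dv x)` has Jacobian
`det (D²v + D²φ) / det D²φ ≤ (ν ρ β)^n / (2m + 1)`, because `det D²φ = (2m + 1) (|Dφ| / |y|)^n`.
Summed over time steps, each `x` is charged a total drop of at most about `H`, so that the drift
enters only through `β = ess sup_t |b|`, and a large `m` contradicts any given bound on `∫ βⁿ`.

Hence a lower bound on a ball of radius `5ρ/4` persists on one of radius `11ρ/16`. Larger barriers,
working only away from the centre already controlled, spread it to radius `2ρ`, and boundedly many
iterations along the axis of the slanted cylinder give the theorem.
-/

section RunningMin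

/-- The running minimum `min (0, f 0, …, f i)` of a sequence, truncated at `0`. -/
def runningMin (f : ℕ → ℝ) : ℕ → ℝ
  | 0 => min 0 (f 0)
  | i + 1 => min (runningMin f i) (f (i + 1))

variable {f g : ℕ → ℝ}

lemma runningMin_le_self (f : ℕ → ℝ) : ∀ i, runningMin f i ≤ f i
  | 0 => min_le_right _ _
  | _ + 1 => min_le_right _ _

lemma runningMin_nonpos (f : ℕ → ℝ) : ∀ i, runningMin f i ≤ 0
  | 0 => min_le_left _ _
  | i + 1 => (min_le_left _ _).trans (runningMin_nonpos f i)

lemma le_runningMin {a : ℝ} (ha : a ≤ 0) (hf : ∀ i, a ≤ f i) : ∀ i, a ≤ runningMin f i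
  | 0 => le_min ha (hf 0)
  | i + 1 => le_min (le_runningMin ha hf i) (hf (i + 1))

lemma runningMin_le_add {a : ℝ} (ha : 0 ≤ a) (hfg : ∀ i, f i ≤ g i + a) :
    ∀ i, runningMin f i ≤ runningMin g i + a
  | 0 => by
    rw [runningMin, runningMin, ← min_add_add_right]
    exact min_le_min (by linarith) (hfg 0)
  | i + 1 => by
    rw [runningMin, runningMin, ← min_add_add_right]
    exact min_le_min (runningMin_le_add ha hfg i) (hfg (i + 1))

lemma continuousOn_runningMin {X : Type*} [TopologicalSpace X] {s : Set X} {F : ℕ → X → ℝ}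
    (hF : ∀ i, ContinuousOn (F i) s) : ∀ i, ContinuousOn (fun x => runningMin (F · x) i) s
  | 0 => continuousOn_const.inf (hF 0)
  | i + 1 => (continuousOn_runningMin hF i).inf (hF (i + 1))

end RunningMin

section PowerPotential

variable {E : Type*} [NormedAddCommGroup E] {b : ℝ} {m : ℕ} {q y : E}

/-- The radial barrier `b / (2m + 2) * ‖y‖ ^ (2m + 2)`, normalised so that its gradient has norm
`b * ‖y‖ ^ (2m + 1)`. -/
def powerPotential (b : ℝ) (m : ℕ) (y : E) : ℝ := b / (2 * (m + 1)) * ‖y‖ ^ (2 * (m + 1))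

lemma powerPotential_nonneg (hb : 0 ≤ b) : 0 ≤ powerPotential b m y := by
  unfold powerPotential; positivity

lemma powerPotential_le_of_norm_le (hb : 0 ≤ b) {r : ℝ} (hy : ‖y‖ ≤ r) :
    powerPotential b m y ≤ b / (2 * (m + 1)) * r ^ (2 * (m + 1)) := by
  unfold powerPotential; gcongr

lemma le_powerPotential_of_le_norm (hb : 0 ≤ b) {r : ℝ} (hr : 0 ≤ r) (hy : r ≤ ‖y‖) :
    b / (2 * (m + 1)) * r ^ (2 * (m + 1)) ≤ powerPotential b m y := by
  unfold powerPotential; gcongr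

lemma continuous_powerPotential : Continuous (powerPotential b m : E → ℝ) := by
  unfold powerPotential; fun_prop

variable [InnerProductSpace ℝ E]

/-- The gradient of `powerPotential`. -/
def powerGrad (b : ℝ) (m : ℕ) (y : E) : E := (b * ‖y‖ ^ (2 * m)) • y

/-- The Hessian of `powerPotential`. -/
def powerHess (b : ℝ) (m : ℕ) (y : E) : E →L[ℝ] E :=
  (b * ‖y‖ ^ (2 * m)) • ContinuousLinearMap.id ℝ E +
    (2 * m * b * ‖y‖ ^ (2 * (m - 1))) • InnerProductSpace.rankOne ℝ y y

/-- The inverse of the map `powerGrad`. -/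
def powerGradInv (b : ℝ) (m : ℕ) (q : E) : E :=
  ((‖q‖ / b) ^ (((2 * m + 1 : ℕ) : ℝ)⁻¹) / ‖q‖) • q

lemma powerGrad_zero : powerGrad b m (0 : E) = 0 := smul_zero _

lemma powerGrad_neg (b : ℝ) (m : ℕ) (y : E) : powerGrad b m (-y) = -powerGrad b m y := by
  simp [powerGrad]

lemma powerHess_neg (b : ℝ) (m : ℕ) (y : E) : powerHess b m (-y) = powerHess b m y := by
  simp [powerHess]

lemma powerHess_apply (b : ℝ) (m : ℕ) (y h : E) :
    powerHess b m y h =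
      (b * ‖y‖ ^ (2 * m)) • h + (2 * m * b * ‖y‖ ^ (2 * (m - 1)) * ⟪y, h⟫) • y := by
  simp [powerHess, smul_smul]

lemma hasFDerivAt_norm_pow_two_mul (k : ℕ) (y : E) :
    HasFDerivAt (fun y : E => ‖y‖ ^ (2 * k)) ((2 * k * ‖y‖ ^ (2 * (k - 1))) • innerSL ℝ y) y := by
  have hsq : HasFDerivAt (fun y : E => ‖y‖ ^ 2) (2 • innerSL ℝ y) y := by
    simpa using (hasStrictFDerivAt_norm_sq y).hasFDerivAt
  simp only [pow_mul]
  refine (hsq.pow k).congr_fderiv ?_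
  ext1 h
  simp only [nsmul_eq_mul, smul_apply, coe_innerSL_apply, Nat.cast_ofNat, smul_eq_mul]
  ring

lemma hasFDerivAt_powerPotential (b : ℝ) (m : ℕ) (y : E) :
    HasFDerivAt (powerPotential b m) (innerSL ℝ (powerGrad b m y)) y := by
  refine ((hasFDerivAt_norm_pow_two_mul (m + 1) y).const_mul (b / (2 * (m + 1)))).congr_fderiv ?_
  ext1 h
  simp only [powerGrad, map_smul, smul_smul]
  congr 1
  push_cast
  field_simp

lemma hasFDerivAt_powerGrad (b : ℝ) (m : ℕ) (y : E) :
    HasFDerivAt (powerGrad b m) (powerHess b m y) y := by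
  refine (((hasFDerivAt_norm_pow_two_mul m y).const_mul b).smul (hasFDerivAt_id y)).congr_fderiv ?_
  ext1 h
  rw [powerHess_apply]
  simp only [smul_smul, id_eq, add_apply, smul_apply, ContinuousLinearMap.id_apply,
    ContinuousLinearMap.smulRight_apply, coe_innerSL_apply, smul_eq_mul]
  congr 2
  ring

lemma norm_powerGrad (hb : 0 ≤ b) (m : ℕ) (y : E) :
    ‖powerGrad b m y‖ = b * ‖y‖ ^ (2 * m + 1) := by
  rw [powerGrad, norm_smul, Real.norm_of_nonneg (by positivity), pow_succ, mul_assoc]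

lemma powerGradInv_powerGrad (hb : 0 < b) (m : ℕ) (y : E) :
    powerGradInv b m (powerGrad b m y) = y := by
  rcases eq_or_ne y 0 with rfl | hy
  · simp [powerGradInv, powerGrad]
  have hy' : 0 < ‖y‖ := norm_pos_iff.2 hy
  rw [powerGradInv, norm_powerGrad hb.le, mul_div_cancel_left₀ _ hb.ne',
    Real.pow_rpow_inv_natCast hy'.le (by omega), powerGrad, smul_smul]
  convert one_smul ℝ y using 2
  field_simp
  ring

lemma norm_powerGradInv (hq : q ≠ 0) :
    ‖powerGradInv b m q‖ = |(‖q‖ / b) ^ (((2 * m + 1 : ℕ) : ℝ)⁻¹)| := by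
  rw [powerGradInv, norm_smul, norm_div, norm_norm, Real.norm_eq_abs,
    div_mul_cancel₀ _ (norm_ne_zero_iff.2 hq)]

lemma powerGrad_powerGradInv (hb : 0 < b) (m : ℕ) (q : E) :
    powerGrad b m (powerGradInv b m q) = q := by
  rcases eq_or_ne q 0 with rfl | hq
  · simp [powerGradInv, powerGrad]
  have hq' : 0 < ‖q‖ := norm_pos_iff.2 hq
  set c := (‖q‖ / b) ^ (((2 * m + 1 : ℕ) : ℝ)⁻¹) with hc
  have hnorm : ‖powerGradInv b m q‖ = c := by
    rw [norm_powerGradInv hq, abs_of_nonneg (by positivity)]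
  have hpow : c ^ (2 * m) * c = ‖q‖ / b := by
    rw [← pow_succ, hc, Real.rpow_inv_natCast_pow (by positivity) (by omega)]
  rw [powerGrad, hnorm, powerGradInv, smul_smul, ← hc]
  convert one_smul ℝ q using 2
  rw [← mul_div_assoc, mul_assoc, hpow, mul_div_cancel₀ _ hb.ne', div_self hq'.ne']

lemma powerGradInv_ne_zero (hb : 0 < b) (hq : q ≠ 0) : powerGradInv b m q ≠ 0 := fun h =>
  hq (by rw [← powerGrad_powerGradInv hb m q, h, powerGrad_zero])

lemma continuousAt_powerGradInv (hb : b ≠ 0) (hq : q ≠ 0) :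
    ContinuousAt (powerGradInv b m) q := by
  have hq' : ‖q‖ ≠ 0 := norm_ne_zero_iff.2 hq
  have hbase : ContinuousAt (fun q : E => ‖q‖ / b) q := by fun_prop
  exact ((hbase.rpow_const (Or.inl (div_ne_zero hq' hb))).div
    continuous_norm.continuousAt hq').smul continuousAt_id

lemma isPositive_powerHess (hb : 0 ≤ b) (m : ℕ) (y : E) : (powerHess b m y).IsPositive :=
  (ContinuousLinearMap.isPositive_id.smul_of_nonneg (by positivity)).add
    ((InnerProductSpace.isPositive_rankOne_self y).smul_of_nonneg (by positivity))

variable [FiniteDimensional ℝ E]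

lemma trace_powerHess (b : ℝ) {m : ℕ} (hm : m ≠ 0) (y : E) :
    LinearMap.trace ℝ E (powerHess b m y) =
      b * ‖y‖ ^ (2 * m) * (Module.finrank ℝ E + 2 * m) := by
  obtain ⟨k, rfl⟩ := Nat.exists_eq_add_one_of_ne_zero hm
  have htrace : LinearMap.trace ℝ E (powerHess b (k + 1) y) =
      b * ‖y‖ ^ (2 * (k + 1)) * Module.finrank ℝ E +
        2 * (k + 1 : ℕ) * b * ‖y‖ ^ (2 * k) * ‖y‖ ^ 2 := by
    simp [powerHess, InnerProductSpace.trace_rankOne]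
  rw [htrace]
  push_cast
  ring

lemma det_powerHess (b : ℝ) {m : ℕ} (hm : m ≠ 0) {y : E} (hy : y ≠ 0) :
    (powerHess b m y).det = (b * ‖y‖ ^ (2 * m)) ^ Module.finrank ℝ E * (2 * m + 1) := by
  obtain ⟨k, rfl⟩ := Nat.exists_eq_add_one_of_ne_zero hm
  have hnorm : ‖y‖ ≠ 0 := norm_ne_zero_iff.2 hy
  have htransvection : (powerHess b (k + 1) y : E →ₗ[ℝ] E) = (b * ‖y‖ ^ (2 * (k + 1))) •
      LinearMap.transvection (innerSL ℝ y : E →ₗ[ℝ] ℝ) ((2 * (k + 1) / ‖y‖ ^ 2) • y) := by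
    ext1 h
    simp only [ContinuousLinearMap.coe_coe, powerHess_apply, LinearMap.smul_apply,
      LinearMap.transvection.apply, smul_add, smul_smul, innerSL_apply_apply,
      Nat.add_sub_cancel]
    congr 2
    push_cast
    field_simp
    ring
  rw [ContinuousLinearMap.det, htransvection, LinearMap.det_smul, LinearMap.transvection.det]
  congr 1
  simp only [map_smul, ContinuousLinearMap.coe_coe, innerSL_apply_apply,
    real_inner_self_eq_norm_sq, smul_eq_mul]
  push_cast
  rw [div_mul_cancel₀ _ (by positivity)]
  ring

lemma exists_hasFDerivAt_powerGradInv (hb : 0 < b) (hm : m ≠ 0) (hq : q ≠ 0) :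
    ∃ e : E ≃L[ℝ] E, (e : E →L[ℝ] E) = powerHess b m (powerGradInv b m q) ∧
      HasFDerivAt (powerGradInv b m) (e.symm : E →L[ℝ] E) q := by
  have hinv := powerGradInv_ne_zero (m := m) hb hq
  have hdet : (powerHess b m (powerGradInv b m q)).det ≠ 0 := by
    rw [det_powerHess b hm hinv]
    have := norm_pos_iff.2 hinv
    positivity
  refine ⟨(powerHess b m (powerGradInv b m q)).toContinuousLinearEquivOfDetNeZero hdet, by simp, ?_⟩
  refine HasFDerivAt.of_local_left_inverse (f := powerGrad b m)
    (continuousAt_powerGradInv hb.ne' hq) ?_ (.of_forall (powerGrad_powerGradInv hb m))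
  simpa using hasFDerivAt_powerGrad b m (powerGradInv b m q)

end PowerPotential

section SecondOrderCondition

lemma nonneg_of_isLocalMin_of_hasDerivAt {f f' : ℝ → ℝ} {f'' a : ℝ}
    (hf : ∀ᶠ s in nhds a, HasDerivAt f (f' s) s) (hf' : HasDerivAt f' f'' a)
    (hmin : IsLocalMin f a) : 0 ≤ f'' := by
  by_contra! hneg
  have hderiv : deriv f =ᶠ[nhds a] f' := hf.mono fun s hs => hs.deriv
  have hderiv2 : deriv (deriv f) a = f'' := by rw [hderiv.deriv_eq, hf'.deriv]
  have hmax : IsLocalMax f a := isLocalMax_of_deriv_deriv_neg (hderiv2 ▸ hneg)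
    hmin.deriv_eq_zero hf.self_of_nhds.continuousAt
  have hconst : f =ᶠ[nhds a] fun _ => f a := by
    filter_upwards [hmin, hmax] with s h₁ h₂ using le_antisymm h₂ h₁
  have hzero : deriv f =ᶠ[nhds a] fun _ => 0 := by simpa using hconst.deriv
  have : f'' = 0 := by rw [← hderiv2, hzero.deriv_eq, deriv_const]
  exact hneg.ne this

variable {E : Type*} [NormedAddCommGroup E] [InnerProductSpace ℝ E] {F : E → ℝ} {G : E → E}
  {M : E →L[ℝ] E} {x : E}

lemma isSymmetric_of_hasFDerivAt_grad (hF : ∀ᶠ y in nhds x, HasFDerivAt F (innerSL ℝ (G y)) y)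
    (hG : HasFDerivAt G M x) : (M : E →ₗ[ℝ] E).IsSymmetric := by
  intro h k
  have hG' : HasFDerivAt (fun y => innerSL ℝ (G y)) ((innerSL ℝ : E →L[ℝ] _).comp M) x :=
    (innerSL ℝ : E →L[ℝ] _).hasFDerivAt.comp x hG
  have hsymm := second_derivative_symmetric_of_eventually hF hG' h k
  simp only [ContinuousLinearMap.comp_apply, innerSL_apply_apply] at hsymm
  simpa only [ContinuousLinearMap.coe_coe, real_inner_comm h] using hsymm

lemma grad_eq_zero_of_isLocalMin (hF : HasFDerivAt F (innerSL ℝ (G x)) x)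
    (hmin : IsLocalMin F x) : G x = 0 := by
  have hzero : innerSL ℝ (G x) (G x) = 0 := by rw [hmin.hasFDerivAt_eq_zero hF]; rfl
  simpa using hzero

lemma isPositive_hess_of_isLocalMin (hF : ∀ᶠ y in nhds x, HasFDerivAt F (innerSL ℝ (G y)) y)
    (hG : HasFDerivAt G M x) (hmin : IsLocalMin F x) : M.IsPositive := by
  refine (ContinuousLinearMap.isPositive_iff M).2
    ⟨isSymmetric_of_hasFDerivAt_grad hF hG, fun h => ?_⟩
  let line : ℝ → E := fun s => x + s • h
  have hline (s : ℝ) : HasDerivAt line h s := by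
    simpa only [one_smul] using ((hasDerivAt_id' s).smul_const h).const_add x
  have hline0 : line 0 = x := by simp [line]
  have htendsto : Filter.Tendsto line (nhds 0) (nhds x) := by
    simpa only [hline0] using (hline 0).continuousAt.tendsto
  refine nonneg_of_isLocalMin_of_hasDerivAt (f := F ∘ line) (f' := fun s => ⟪G (line s), h⟫)
    (a := 0) ?_ ?_ ?_
  · filter_upwards [htendsto.eventually hF] with s hs
    simpa using hs.comp_hasDerivAt s (hline s)
  · have hGline : HasDerivAt (fun s => G (line s)) (M h) 0 := by
      rw [← hline0] at hG
      exact hG.comp_hasDerivAt 0 (hline 0)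
    simpa using hGline.inner ℝ (hasDerivAt_const (0 : ℝ) h)
  · filter_upwards [htendsto.eventually hmin] with s hs
    simpa only [Function.comp_apply, hline0] using hs

end SecondOrderCondition

section Area

variable {E : Type*} [NormedAddCommGroup E] [NormedSpace ℝ E] [FiniteDimensional ℝ E]
  [MeasurableSpace E] [BorelSpace E]

lemma setLIntegral_le_lintegral_abs_det_fderiv_mul (μ : Measure E) [μ.IsAddHaarMeasure]
    {A Ξ : Set E} (hA : MeasurableSet A) {Ψ : E → E} {Ψ' : E → E →L[ℝ] E}
    (hΨ : ∀ x ∈ A, HasFDerivWithinAt Ψ (Ψ' x) A x) (hΞ : Ξ ⊆ Ψ '' A)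
    {f : E → ℝ≥0∞} (hf : Measurable f) :
    ∫⁻ ξ in Ξ, f ξ ∂μ ≤ ∫⁻ x in A, ENNReal.ofReal |(Ψ' x).det| * f (Ψ x) ∂μ := by
  have hcont : ContinuousOn Ψ A := fun x hx => (hΨ x hx).continuousWithinAt
  have hdet := aemeasurable_ofReal_abs_det_fderivWithin μ hA hΨ
  set μΨ := (μ.restrict A).withDensity (fun x => ENNReal.ofReal |(Ψ' x).det|) with hμΨ
  have hmeas : AEMeasurable Ψ μΨ :=
    (hcont.aemeasurable hA).mono_ac (withDensity_absolutelyContinuous _ _)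
  have hle : μ.restrict Ξ ≤ μΨ.map Ψ := by
    refine Measure.le_iff.2 fun T hT => ?_
    rw [Measure.restrict_apply hT, Measure.map_apply_of_aemeasurable hmeas hT]
    have hAT : MeasurableSet (A ∩ Ψ ⁻¹' T) := by
      rw [← Subtype.image_preimage_coe]
      exact hA.subtype_image ((continuousOn_iff_continuous_domRestrict.1 hcont).measurable hT)
    calc μ (T ∩ Ξ) ≤ μ (Ψ '' (A ∩ Ψ ⁻¹' T)) := by
          refine measure_mono ?_
          rintro ξ ⟨hξT, hξΞ⟩
          obtain ⟨x, hx, rfl⟩ := hΞ hξΞ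
          exact ⟨x, ⟨hx, hξT⟩, rfl⟩
      _ ≤ ∫⁻ x in A ∩ Ψ ⁻¹' T, ENNReal.ofReal |(Ψ' x).det| ∂μ :=
          addHaar_image_le_lintegral_abs_det_fderiv μ hAT
            fun x hx => (hΨ x hx.1).mono inter_subset_left
      _ = μΨ (A ∩ Ψ ⁻¹' T) := by
          rw [hμΨ, withDensity_apply _ hAT, Measure.restrict_restrict hAT,
            inter_eq_left.2 inter_subset_left]
      _ ≤ μΨ (Ψ ⁻¹' T) := measure_mono inter_subset_right
  calc ∫⁻ ξ in Ξ, f ξ ∂μ ≤ ∫⁻ ξ, f ξ ∂(μΨ.map Ψ) := lintegral_mono' hle le_rfl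
    _ = ∫⁻ x, f (Ψ x) ∂μΨ := lintegral_map' hf.aemeasurable hmeas
    _ = ∫⁻ x in A, ENNReal.ofReal |(Ψ' x).det| * f (Ψ x) ∂μ :=
      lintegral_withDensity_eq_lintegral_mul₀ hdet
        (hf.comp_aemeasurable (hcont.aemeasurable hA))

end Area

section InfConv

variable {E : Type*} [AddGroup E] {K : Set E} {φ w : E → ℝ} {x ξ : E}

/-- The infimal convolution of `w` with the barrier `φ`, with base points restricted to `K`: the
height at which `-φ (· - ξ)`, slid upwards, first touches the graph of `w` over `K`. -/
def infConv (K : Set E) (φ w : E → ℝ) (ξ : E) : ℝ := ⨅ x : K, (w x + φ (x - ξ))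

lemma infConv_eq_of_isMinOn (hx : x ∈ K) (hmin : IsMinOn (fun z => w z + φ (z - ξ)) K x) :
    infConv K φ w ξ = w x + φ (x - ξ) :=
  IsLeast.csInf_eq ⟨⟨⟨x, hx⟩, rfl⟩, by rintro _ ⟨z, rfl⟩; exact hmin z.2⟩

variable [TopologicalSpace E] [IsTopologicalAddGroup E]

lemma exists_isMinOn_add_comp_sub (hK : IsCompact K) (hne : K.Nonempty) (hφ : Continuous φ)
    (hw : ContinuousOn w K) (ξ : E) : ∃ x ∈ K, IsMinOn (fun z => w z + φ (z - ξ)) K x :=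
  hK.exists_isMinOn hne (hw.add (by fun_prop))

lemma infConv_le (hK : IsCompact K) (hφ : Continuous φ) (hw : ContinuousOn w K) (ξ : E)
    {z : E} (hz : z ∈ K) : infConv K φ w ξ ≤ w z + φ (z - ξ) := by
  obtain ⟨x, hx, hmin⟩ := exists_isMinOn_add_comp_sub hK ⟨z, hz⟩ hφ hw ξ
  exact infConv_eq_of_isMinOn hx hmin ▸ hmin hz

lemma isMinOn_iff_infConv_eq (hK : IsCompact K) (hφ : Continuous φ) (hw : ContinuousOn w K)
    (hx : x ∈ K) :
    IsMinOn (fun z => w z + φ (z - ξ)) K x ↔ infConv K φ w ξ = w x + φ (x - ξ) :=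
  ⟨infConv_eq_of_isMinOn hx, fun h _ hz => h.symm.trans_le (infConv_le hK hφ hw ξ hz)⟩

lemma continuous_infConv (hK : IsCompact K) (hφ : Continuous φ) (hw : ContinuousOn w K) :
    Continuous (infConv K φ w) := by
  have hdomain : Continuous fun x : K => w x := continuousOn_iff_continuous_domRestrict.1 hw
  have hjoint : Continuous fun p : E × K => w p.2 + φ (p.2 - p.1) :=
    (hdomain.comp continuous_snd).add
      (hφ.comp ((continuous_subtype_val.comp continuous_snd).sub continuous_fst))
  have hsInf := (isCompact_iff_isCompact_univ.1 hK).continuous_sInf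
    (f := fun ξ (x : K) => w x + φ (x - ξ)) hjoint
  simp only [image_univ] at hsInf
  exact hsInf

end InfConv

section Contact

variable {E : Type*} [NormedAddCommGroup E] [InnerProductSpace ℝ E] {b d H ρ : ℝ} {m : ℕ}
  {K U Ξ : Set E} {w : E → ℝ} {q : E → E} {M : E → E →L[ℝ] E} {x ξ : E}

/-- The map sending a point `x` at which a function with gradient `q` touches a slid barrier
`-powerPotential b m (· - ξ)` to the centre `ξ` of that barrier. -/
def contactMap (b : ℝ) (m : ℕ) (q : E → E) (x : E) : E := x + powerGradInv b m (q x)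

lemma contactMap_eq (hb : 0 < b) (hq : q x = powerGrad b m (ξ - x)) :
    contactMap b m q x = ξ := by
  rw [contactMap, hq, powerGradInv_powerGrad hb, add_sub_cancel]

/-- The points `x ∈ U` at which `w` touches, from above over `K` and with nonzero gradient, a slid
barrier centred in `Ξ`. -/
def contactSet (b : ℝ) (m : ℕ) (K U Ξ : Set E) (w : E → ℝ) (q : E → E) : Set E :=
  {x | (x ∈ U ∧ q x ≠ 0) ∧ contactMap b m q x ∈ Ξ ∧
    IsMinOn (fun z => w z + powerPotential b m (z - contactMap b m q x)) K x}

/-- The information the equation has to provide at a contact point with gradient `p` and Hessian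
(including the barrier) `N`: nondegeneracy of the gradient and, where the drift bound `B` is finite,
a bound on the determinant. -/
def HasDetBound (B : ℝ≥0∞) (p : E) (N : E →L[ℝ] E) : Prop :=
  p ≠ 0 ∧ (B ≠ ∞ → N.det ≤ (B.toReal * ‖p‖) ^ Module.finrank ℝ E)

lemma grad_eq_and_isPositive_of_isMinOn (hU : IsOpen U) (hUK : U ⊆ K)
    (hw : ∀ x ∈ U, HasFDerivAt w (innerSL ℝ (q x)) x) (hx : x ∈ U) (hM : HasFDerivAt q (M x) x)
    (hmin : IsMinOn (fun z => w z + powerPotential b m (z - ξ)) K x) :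
    q x = powerGrad b m (ξ - x) ∧ (M x + powerHess b m (ξ - x)).IsPositive := by
  have hUx : U ∈ nhds x := hU.mem_nhds hx
  have hlocal := hmin.isLocalMin (Filter.mem_of_superset hUx hUK)
  have hF : ∀ᶠ y in nhds x, HasFDerivAt (fun z => w z + powerPotential b m (z - ξ))
      (innerSL ℝ (q y + powerGrad b m (y - ξ))) y := by
    filter_upwards [hUx] with y hy
    rw [map_add]
    exact (hw y hy).add ((hasFDerivAt_comp_sub ξ).2 (hasFDerivAt_powerPotential b m (y - ξ)))
  have hG : HasFDerivAt (fun y => q y + powerGrad b m (y - ξ)) (M x + powerHess b m (x - ξ)) x :=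
    hM.add ((hasFDerivAt_comp_sub ξ).2 (hasFDerivAt_powerGrad b m (x - ξ)))
  rw [← neg_sub x ξ, powerGrad_neg, powerHess_neg]
  exact ⟨eq_neg_of_add_eq_zero_left
      (grad_eq_zero_of_isLocalMin (G := fun y => q y + powerGrad b m (y - ξ))
        hF.self_of_nhds hlocal),
    isPositive_hess_of_isLocalMin hF hG hlocal⟩

lemma subset_image_contactMap (hb : 0 < b) (hK : IsCompact K) (hne : K.Nonempty)
    (hw : ContinuousOn w K)
    (hcontact : ∀ ξ ∈ Ξ, ∀ x ∈ K, IsMinOn (fun z => w z + powerPotential b m (z - ξ)) K x →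
      x ∈ U ∧ q x = powerGrad b m (ξ - x) ∧ q x ≠ 0) :
    Ξ ⊆ contactMap b m q '' contactSet b m K U Ξ w q := by
  intro ξ hξ
  obtain ⟨x, hx, hmin⟩ := exists_isMinOn_add_comp_sub hK hne continuous_powerPotential hw ξ
  obtain ⟨hxU, hgrad, hne⟩ := hcontact ξ hξ x hx hmin
  have hmap := contactMap_eq hb hgrad
  exact ⟨x, ⟨⟨hxU, hne⟩, hmap ▸ hξ, hmap ▸ hmin⟩, hmap⟩

lemma measurableSet_contactSet [MeasurableSpace E] [BorelSpace E] (hb : b ≠ 0)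
    (hK : IsCompact K) (hU : IsOpen U) (hUK : U ⊆ K) (hΞ : MeasurableSet Ξ)
    (hw : ContinuousOn w K) (hq : ContinuousOn q U) :
    MeasurableSet (contactSet b m K U Ξ w q) := by
  set O : Set E := {x | x ∈ U ∧ q x ≠ 0}
  have hO : IsOpen O := hq.isOpen_inter_preimage hU isOpen_ne
  have hcont : ContinuousOn (contactMap b m q) O := by
    intro x hx
    have hinv : ContinuousAt (fun z => powerGradInv b m (q z)) x :=
      ContinuousAt.comp (continuousAt_powerGradInv hb hx.2) (hq.continuousAt (hU.mem_nhds hx.1))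
    exact (continuousAt_id.add hinv).continuousWithinAt
  have hmap : Continuous fun x : O => contactMap b m q x :=
    continuousOn_iff_continuous_domRestrict.1 hcont
  have hwO : Continuous fun x : O => w x :=
    continuousOn_iff_continuous_domRestrict.1 (hw.mono fun x hx => hUK hx.1)
  have hset : contactSet b m K U Ξ w q = Subtype.val '' {x : O | contactMap b m q x ∈ Ξ ∧
      infConv K (powerPotential b m) w (contactMap b m q x) =
        w x + powerPotential b m ((x : E) - contactMap b m q x)} := by
    ext x
    simp only [contactSet, mem_ofPred_eq, mem_image, Subtype.exists, exists_and_left,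
      exists_prop, exists_eq_right_right]
    rw [and_comm (b := x ∈ O)]
    refine and_congr_right fun hx => and_congr_right fun _ => ?_
    exact isMinOn_iff_infConv_eq hK continuous_powerPotential hw (hUK hx.1)
  rw [hset]
  refine hO.measurableSet.subtype_image (MeasurableSet.inter (hmap.measurable hΞ) ?_)
  exact (isClosed_eq ((continuous_infConv hK continuous_powerPotential hw).comp hmap)
    (hwO.add (continuous_powerPotential.comp (continuous_subtype_val.sub hmap)))).measurableSet

variable [FiniteDimensional ℝ E]

lemma det_nonneg_of_isPositive {T : E →L[ℝ] E} (hT : T.IsPositive) : 0 ≤ T.det := by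
  have hpsd := (LinearMap.posSemidef_toMatrix_iff (stdOrthonormalBasis ℝ E)).2 hT.toLinearMap
  rw [ContinuousLinearMap.det, ← LinearMap.det_toMatrix (stdOrthonormalBasis ℝ E).toBasis]
  exact hpsd.det_nonneg

lemma exists_hasFDerivAt_contactMap (hb : 0 < b) (hm : m ≠ 0) (hq : HasFDerivAt q (M x) x)
    (hqx : q x ≠ 0) :
    ∃ T : E →L[ℝ] E, HasFDerivAt (contactMap b m q) T x ∧
      (powerHess b m (powerGradInv b m (q x))).det * T.det =
        (M x + powerHess b m (powerGradInv b m (q x))).det := by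
  obtain ⟨e, he, hderiv⟩ := exists_hasFDerivAt_powerGradInv hb hm hqx
  refine ⟨ContinuousLinearMap.id ℝ E + (e.symm : E →L[ℝ] E).comp (M x),
    (hasFDerivAt_id x).add (hderiv.comp x hq), ?_⟩
  rw [← he]
  simp only [ContinuousLinearMap.det]
  rw [← LinearMap.det_comp]
  congr 1
  ext1 h
  simp [add_comm]

lemma ofReal_abs_det_le (hb : 0 < b) (hm : m ≠ 0) {y p : E} {T N : E →L[ℝ] E} {B : ℝ≥0∞}
    (hyρ : ‖y‖ ≤ ρ) (hp : p = powerGrad b m y) (hT : (powerHess b m y).det * T.det = N.det)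
    (hN : N.IsPositive) (hdet : HasDetBound B p N) :
    ENNReal.ofReal |T.det| ≤
      ENNReal.ofReal (ρ ^ Module.finrank ℝ E / (2 * m + 1)) * B ^ Module.finrank ℝ E := by
  have hy : y ≠ 0 := by rintro rfl; exact hdet.1 (hp.trans powerGrad_zero)
  have hy' : 0 < ‖y‖ := norm_pos_iff.2 hy
  have hcoef : 0 < ρ ^ Module.finrank ℝ E / (2 * m + 1) :=
    div_pos (pow_pos (hy'.trans_le hyρ) _) (by positivity)
  rcases eq_or_ne B ∞ with rfl | hB
  · have : Nontrivial E := nontrivial_of_ne y 0 hy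
    rw [ENNReal.top_pow Module.finrank_pos.ne', ENNReal.mul_top (by simpa using hcoef)]
    exact le_top
  have hhess : 0 < (powerHess b m y).det := by rw [det_powerHess b hm hy]; positivity
  have hTnonneg : 0 ≤ T.det :=
    nonneg_of_mul_nonneg_right (hT ▸ det_nonneg_of_isPositive hN) hhess
  have hsplit : (B.toReal * ‖p‖) ^ Module.finrank ℝ E = (powerHess b m y).det *
      (‖y‖ ^ Module.finrank ℝ E / (2 * m + 1) * B.toReal ^ Module.finrank ℝ E) := by
    rw [hp, norm_powerGrad hb.le, det_powerHess b hm hy]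
    field_simp
    ring
  have hle : T.det ≤ ρ ^ Module.finrank ℝ E / (2 * m + 1) * B.toReal ^ Module.finrank ℝ E := by
    refine (le_of_mul_le_mul_left (hT ▸ hsplit ▸ hdet.2 hB) hhess).trans ?_
    gcongr
  calc ENNReal.ofReal |T.det| ≤ _ := ENNReal.ofReal_le_ofReal (abs_of_nonneg hTnonneg ▸ hle)
    _ = ENNReal.ofReal (ρ ^ Module.finrank ℝ E / (2 * m + 1)) * B ^ Module.finrank ℝ E := by
      rw [ENNReal.ofReal_mul hcoef.le, ENNReal.ofReal_pow toReal_nonneg, ENNReal.ofReal_toReal hB]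

variable [MeasurableSpace E] [BorelSpace E]

/- This is the area formula for the contact map, whose Jacobian at `x` is
`det (D²w + D²φ) / det (D²φ) ≤ ρ ^ n / (2m + 1) * B x ^ n`. -/
lemma setLIntegral_le_of_contact (μ : Measure E) [μ.IsAddHaarMeasure] (hb : 0 < b) (hm : m ≠ 0)
    (hK : IsCompact K) (hne : K.Nonempty) (hU : IsOpen U) (hUK : U ⊆ K) (hΞ : MeasurableSet Ξ)
    (hw : ContinuousOn w K) (hgrad : ∀ x ∈ U, HasFDerivAt w (innerSL ℝ (q x)) x)
    (hhess : ∀ x ∈ U, HasFDerivAt q (M x) x) {f D B : E → ℝ≥0∞} (hf : Measurable f)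
    (hinside : ∀ ξ ∈ Ξ, ∀ x ∈ K, IsMinOn (fun z => w z + powerPotential b m (z - ξ)) K x →
      x ∈ U ∧ ‖ξ - x‖ ≤ ρ ∧ f ξ ≤ D x)
    (hdet : ∀ ξ ∈ Ξ, ∀ x ∈ U, IsMinOn (fun z => w z + powerPotential b m (z - ξ)) K x →
      q x = powerGrad b m (ξ - x) → (M x + powerHess b m (ξ - x)).IsPositive →
      HasDetBound (B x) (q x) (M x + powerHess b m (ξ - x))) :
    ∫⁻ ξ in Ξ, f ξ ∂μ ≤ ∫⁻ x in U, D x *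
      (ENNReal.ofReal (ρ ^ Module.finrank ℝ E / (2 * m + 1)) * B x ^ Module.finrank ℝ E) ∂μ := by
  have hcontact (ξ) (x) (hxU : x ∈ U)
      (hmin : IsMinOn (fun z => w z + powerPotential b m (z - ξ)) K x) :=
    grad_eq_and_isPositive_of_isMinOn hU hUK hgrad hxU (hhess x hxU) hmin
  have hA : MeasurableSet (contactSet b m K U Ξ w q) := measurableSet_contactSet hb.ne' hK hU hUK
    hΞ hw fun x hx => (hhess x hx).continuousAt.continuousWithinAt
  have hcover : Ξ ⊆ contactMap b m q '' contactSet b m K U Ξ w q := by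
    refine subset_image_contactMap hb hK hne hw fun ξ hξ x hx hmin => ?_
    have hxU := (hinside ξ hξ x hx hmin).1
    obtain ⟨hq, hpos⟩ := hcontact ξ x hxU hmin
    exact ⟨hxU, hq, (hdet ξ hξ x hxU hmin hq hpos).1⟩
  choose! T hT hTdet using fun x (hx : x ∈ contactSet b m K U Ξ w q) =>
    exists_hasFDerivAt_contactMap hb hm (hhess x hx.1.1) hx.1.2
  calc ∫⁻ ξ in Ξ, f ξ ∂μ
      ≤ ∫⁻ x in contactSet b m K U Ξ w q, ENNReal.ofReal |(T x).det| *
          f (contactMap b m q x) ∂μ :=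
        setLIntegral_le_lintegral_abs_det_fderiv_mul μ hA
          (fun x hx => (hT x hx).hasFDerivWithinAt) hcover hf
    _ ≤ ∫⁻ x in contactSet b m K U Ξ w q, D x * (ENNReal.ofReal
          (ρ ^ Module.finrank ℝ E / (2 * m + 1)) * B x ^ Module.finrank ℝ E) ∂μ := by
        refine setLIntegral_mono' hA fun x ⟨⟨hxU, _⟩, hΞx, hmin⟩ => ?_
        obtain ⟨_, hle, hfD⟩ := hinside _ hΞx x (hUK hxU) hmin
        obtain ⟨hq, hpos⟩ := hcontact _ x hxU hmin
        have hinv : powerGradInv b m (q x) = contactMap b m q x - x := by simp [contactMap]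
        rw [mul_comm]
        gcongr
        exact ofReal_abs_det_le hb hm hle hq (hinv ▸ hTdet x ⟨⟨hxU, ‹_›⟩, hΞx, hmin⟩) hpos
          (hdet _ hΞx x hxU hmin hq hpos)
    _ ≤ _ := lintegral_mono_set fun x hx => hx.1.1

end Contact

section DiscreteContact

variable {E : Type*} [NormedAddCommGroup E] {K : Set E} {φ : E → ℝ} {w : ℕ → E → ℝ} {x ξ : E}

lemma lt_and_sub_le_of_isMinOn_of_runningMin_lt (hK : IsCompact K) (hφ : Continuous φ)
    (hφ0 : ∀ y, 0 ≤ φ y) (hw : ∀ i, ContinuousOn (w i) K) {i : ℕ} (hx : x ∈ K)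
    (hmin : IsMinOn (fun z => w (i + 1) z + φ (z - ξ)) K x)
    (hlt : runningMin (fun j => infConv K φ (w j) ξ) (i + 1) <
      runningMin (fun j => infConv K φ (w j) ξ) i) :
    w (i + 1) x + φ (x - ξ) < 0 ∧ w (i + 1) x < runningMin (w · x) i ∧
      runningMin (fun j => infConv K φ (w j) ξ) i -
          runningMin (fun j => infConv K φ (w j) ξ) (i + 1) ≤
        runningMin (w · x) i - runningMin (w · x) (i + 1) := by
  have hconv : ∀ j, infConv K φ (w j) ξ ≤ w j x + φ (x - ξ) :=
    fun j => infConv_le hK hφ (hw j) ξ hx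
  have hle := runningMin_le_add (hφ0 (x - ξ)) hconv i
  have hnonpos := runningMin_nonpos (fun j => infConv K φ (w j) ξ) i
  have hnew : runningMin (fun j => infConv K φ (w j) ξ) (i + 1) = w (i + 1) x + φ (x - ξ) := by
    rw [← infConv_eq_of_isMinOn hx hmin]
    exact min_eq_right ((min_lt_iff.1 hlt).resolve_left (lt_irrefl _)).le
  have hdrop : w (i + 1) x < runningMin (w · x) i := by linarith
  have hnew' : runningMin (w · x) (i + 1) = w (i + 1) x := min_eq_right hdrop.le
  exact ⟨by linarith, hdrop, by linarith⟩

lemma ofReal_runningMin_drop_sum (f : ℕ → ℝ) (N : ℕ) :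
    ∑ i ∈ Finset.range N, ENNReal.ofReal (runningMin f i - runningMin f (i + 1)) =
      ENNReal.ofReal (runningMin f 0 - runningMin f N) := by
  have hanti : ∀ i, runningMin f (i + 1) ≤ runningMin f i := fun i => min_le_left _ _
  rw [← ENNReal.ofReal_sum_of_nonneg fun i _ => sub_nonneg.2 (hanti i), Finset.sum_range_sub']

lemma sum_lintegral_le_lintegral_sum {α : Type*} [MeasurableSpace α] (μ : Measure α) (N : ℕ)
    (f : ℕ → α → ℝ≥0∞) :
    ∑ i ∈ Finset.range N, ∫⁻ x, f i x ∂μ ≤ ∫⁻ x, ∑ i ∈ Finset.range N, f i x ∂μ := by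
  induction N with
  | zero => simp
  | succ N ih =>
    simp only [Finset.sum_range_succ]
    exact (add_le_add_left ih _).trans (le_lintegral_add _ _)

lemma sum_setLIntegral_runningMin_drop_le {α : Type*} [MeasurableSpace α] (μ : Measure α)
    {U : Set α} (hU : MeasurableSet U) {H : ℝ} (hH : 0 ≤ H) {w : ℕ → α → ℝ}
    (hlow : ∀ i, ∀ x ∈ U, -H ≤ w i x) {B : α → ℝ≥0∞} {c : ℝ≥0∞} (hc : c ≠ ∞) (N k : ℕ) :
    ∑ i ∈ Finset.range N, ∫⁻ x in U,
        ENNReal.ofReal (runningMin (w · x) i - runningMin (w · x) (i + 1)) * (c * B x ^ k) ∂μ ≤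
      ENNReal.ofReal H * c * ∫⁻ x in U, B x ^ k ∂μ := by
  rw [← lintegral_const_mul' _ _ (ENNReal.mul_ne_top ofReal_ne_top hc)]
  refine (sum_lintegral_le_lintegral_sum _ _ _).trans (setLIntegral_mono' hU fun x hx => ?_)
  rw [← Finset.sum_mul, ofReal_runningMin_drop_sum, ← mul_assoc]
  gcongr
  have hupper := runningMin_nonpos (w · x) 0
  have hlower := le_runningMin (neg_nonpos.2 hH) (fun i => hlow i x hx) N
  linarith

variable [InnerProductSpace ℝ E] [FiniteDimensional ℝ E] [MeasurableSpace E] [BorelSpace E]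
  {b d H ρ : ℝ} {m : ℕ} {U Ξ : Set E} {q : ℕ → E → E} {M : ℕ → E → E →L[ℝ] E} {B : E → ℝ≥0∞}

lemma setLIntegral_runningMin_drop_le (μ : Measure E) [μ.IsAddHaarMeasure] (hb : 0 < b)
    (hm : m ≠ 0) (hK : IsCompact K) (hne : K.Nonempty) (hU : IsOpen U) (hUK : U ⊆ K)
    (hΞ : MeasurableSet Ξ) (hw : ∀ i, ContinuousOn (w i) K)
    (hgrad : ∀ i, ∀ x ∈ U, HasFDerivAt (w i) (innerSL ℝ (q i x)) x)
    (hhess : ∀ i, ∀ x ∈ U, HasFDerivAt (q i) (M i x) x)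
    (hinside : ∀ i, ∀ ξ ∈ Ξ, ∀ x ∈ K, w i x + powerPotential b m (x - ξ) < 0 →
      x ∈ U ∧ ‖ξ - x‖ ≤ ρ)
    (hcontact : ∀ i, ∀ ξ ∈ Ξ, ∀ x ∈ U, w (i + 1) x + powerPotential b m (x - ξ) < 0 →
      w (i + 1) x < w i x → q (i + 1) x = powerGrad b m (ξ - x) →
      (M (i + 1) x + powerHess b m (ξ - x)).IsPositive →
      HasDetBound (B x) (q (i + 1) x) (M (i + 1) x + powerHess b m (ξ - x))) (i : ℕ) :
    ∫⁻ ξ in Ξ, ENNReal.ofReal (runningMin (fun j => infConv K (powerPotential b m) (w j) ξ) i -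
        runningMin (fun j => infConv K (powerPotential b m) (w j) ξ) (i + 1)) ∂μ ≤
      ∫⁻ x in U, ENNReal.ofReal (runningMin (w · x) i - runningMin (w · x) (i + 1)) *
        (ENNReal.ofReal (ρ ^ Module.finrank ℝ E / (2 * m + 1)) *
          B x ^ Module.finrank ℝ E) ∂μ := by
  set F : ℕ → E → ℝ := fun i ξ =>
    runningMin (fun j => infConv K (powerPotential b m) (w j) ξ) i
  have hF : ∀ i, Continuous (F i) := fun i => continuousOn_univ.1 <|
    continuousOn_runningMin (fun j =>
      (continuous_infConv hK continuous_powerPotential (hw j)).continuousOn) i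
  have hlt : MeasurableSet {ξ | F (i + 1) ξ < F i ξ} :=
    (isOpen_lt (hF (i + 1)) (hF i)).measurableSet
  have hdrop (ξ) (hξ : F (i + 1) ξ < F i ξ) (x) (hx : x ∈ K)
      (hmin : IsMinOn (fun z => w (i + 1) z + powerPotential b m (z - ξ)) K x) :=
    lt_and_sub_le_of_isMinOn_of_runningMin_lt hK continuous_powerPotential
      (fun _ => powerPotential_nonneg hb.le) hw hx hmin hξ
  calc ∫⁻ ξ in Ξ, ENNReal.ofReal (F i ξ - F (i + 1) ξ) ∂μ
      = ∫⁻ ξ in Ξ ∩ {ξ | F (i + 1) ξ < F i ξ}, ENNReal.ofReal (F i ξ - F (i + 1) ξ) ∂μ := by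
        rw [← lintegral_inter_add_sdiff _ Ξ hlt, setLIntegral_eq_zero (hΞ.diff hlt), add_zero]
        exact fun ξ hξ => ENNReal.ofReal_of_nonpos (sub_nonpos.2 (not_lt.1 hξ.2))
    _ ≤ _ := by
      refine setLIntegral_le_of_contact μ hb hm hK hne hU hUK (hΞ.inter hlt) (hw (i + 1))
        (hgrad (i + 1)) (hhess (i + 1)) ((hF i).sub (hF (i + 1))).measurable.ennreal_ofReal
        (fun ξ hξ x hx hmin => ?_) fun ξ hξ x hx hmin => ?_
      · obtain ⟨hneg, -, hle⟩ := hdrop ξ hξ.2 x hx hmin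
        obtain ⟨hxU, hξx⟩ := hinside (i + 1) ξ hξ.1 x hx hneg
        exact ⟨hxU, hξx, ENNReal.ofReal_le_ofReal hle⟩
      · obtain ⟨hneg, hltw, -⟩ := hdrop ξ hξ.2 x (hUK hx) hmin
        exact hcontact i ξ hξ.1 x hx hneg (hltw.trans_le (runningMin_le_self _ _))

/- As `i` runs through the time steps, the heights at which the barriers centred in `Ξ` touch drop
by `d` in total, and each drop is paid for by a drop of `w` at the contact point. -/
lemma ofReal_mul_measure_le_of_seq_contact (μ : Measure E) [μ.IsAddHaarMeasure] (hb : 0 < b)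
    (hm : m ≠ 0) (hH : 0 ≤ H) (hK : IsCompact K) (hne : K.Nonempty) (hU : IsOpen U) (hUK : U ⊆ K)
    (hΞ : MeasurableSet Ξ) (hw : ∀ i, ContinuousOn (w i) K)
    (hgrad : ∀ i, ∀ x ∈ U, HasFDerivAt (w i) (innerSL ℝ (q i x)) x)
    (hhess : ∀ i, ∀ x ∈ U, HasFDerivAt (q i) (M i x) x) (hlow : ∀ i, ∀ x ∈ U, -H ≤ w i x)
    (hstart : ∀ ξ ∈ Ξ, ∀ x ∈ K, 0 ≤ w 0 x + powerPotential b m (x - ξ)) {N : ℕ}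
    (hend : ∀ ξ ∈ Ξ, ∃ x ∈ K, w N x + powerPotential b m (x - ξ) ≤ -d)
    (hinside : ∀ i, ∀ ξ ∈ Ξ, ∀ x ∈ K, w i x + powerPotential b m (x - ξ) < 0 →
      x ∈ U ∧ ‖ξ - x‖ ≤ ρ)
    (hcontact : ∀ i, ∀ ξ ∈ Ξ, ∀ x ∈ U, w (i + 1) x + powerPotential b m (x - ξ) < 0 →
      w (i + 1) x < w i x → q (i + 1) x = powerGrad b m (ξ - x) →
      (M (i + 1) x + powerHess b m (ξ - x)).IsPositive →
      HasDetBound (B x) (q (i + 1) x) (M (i + 1) x + powerHess b m (ξ - x))) :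
    ENNReal.ofReal d * μ Ξ ≤
      ENNReal.ofReal H * ENNReal.ofReal (ρ ^ Module.finrank ℝ E / (2 * m + 1)) *
        ∫⁻ x in U, B x ^ Module.finrank ℝ E ∂μ := by
  set f : E → ℕ → ℝ := fun ξ j => infConv K (powerPotential b m) (w j) ξ
  have hdepth : ∀ ξ ∈ Ξ, d ≤ runningMin (f ξ) 0 - runningMin (f ξ) N := by
    intro ξ hξ
    obtain ⟨x₀, hx₀, hmin⟩ := exists_isMinOn_add_comp_sub hK hne
      (continuous_powerPotential (b := b) (m := m)) (hw 0) ξ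
    have hzero : 0 ≤ runningMin (f ξ) 0 :=
      le_min le_rfl ((hstart ξ hξ x₀ hx₀).trans_eq (infConv_eq_of_isMinOn hx₀ hmin).symm)
    obtain ⟨x, hx, hxd⟩ := hend ξ hξ
    have hconv : f ξ N ≤ -d := (infConv_le hK continuous_powerPotential (hw N) ξ hx).trans hxd
    linarith [runningMin_le_self (f ξ) N]
  have hmeas : ∀ i, Measurable fun ξ => runningMin (f ξ) i := fun i =>
    (continuousOn_univ.1 <| continuousOn_runningMin (fun j =>
      (continuous_infConv hK continuous_powerPotential (hw j)).continuousOn) i).measurable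
  calc ENNReal.ofReal d * μ Ξ = ∫⁻ _ in Ξ, ENNReal.ofReal d ∂μ := (setLIntegral_const _ _).symm
    _ ≤ ∫⁻ ξ in Ξ, ∑ i ∈ Finset.range N,
          ENNReal.ofReal (runningMin (f ξ) i - runningMin (f ξ) (i + 1)) ∂μ :=
        setLIntegral_mono' hΞ fun ξ hξ => by
          rw [ofReal_runningMin_drop_sum]
          exact ENNReal.ofReal_le_ofReal (hdepth ξ hξ)
    _ = ∑ i ∈ Finset.range N, ∫⁻ ξ in Ξ,
          ENNReal.ofReal (runningMin (f ξ) i - runningMin (f ξ) (i + 1)) ∂μ :=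
        lintegral_finsetSum _ fun i _ => ((hmeas i).sub (hmeas (i + 1))).ennreal_ofReal
    _ ≤ _ := Finset.sum_le_sum fun i _ => setLIntegral_runningMin_drop_le μ hb hm hK hne hU hUK
        hΞ hw hgrad hhess hinside hcontact i
    _ ≤ _ := sum_setLIntegral_runningMin_drop_le μ hU.measurableSet hH hlow ofReal_ne_top N _

end DiscreteContact

section Jet

variable {E : Type*} [NormedAddCommGroup E] [InnerProductSpace ℝ E]

/-- A function `val` of a point `(x, t)`, together with its time derivative, spatial gradient and
spatial Hessian. That these are the derivatives of `val` is recorded by `Jet.IsRegularOn`. -/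
structure Jet (E : Type*) [NormedAddCommGroup E] [InnerProductSpace ℝ E] where
  val : E × ℝ → ℝ
  timeDeriv : E × ℝ → ℝ
  grad : E × ℝ → E
  hess : E × ℝ → E →L[ℝ] E

/-- At the points of `Q` the components of the jet are the derivatives of its value, and the value
and its time derivative are continuous on `Q`. -/
structure Jet.IsRegularOn (J : Jet E) (Q : Set (E × ℝ)) : Prop where
  hasFDerivAt_val : ∀ X ∈ Q, HasFDerivAt (fun x => J.val (x, X.2)) (innerSL ℝ (J.grad X)) X.1
  hasFDerivAt_grad : ∀ X ∈ Q, HasFDerivAt (fun x => J.grad (x, X.2)) (J.hess X) X.1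
  hasDerivAt_val : ∀ X ∈ Q, HasDerivAt (fun t => J.val (X.1, t)) (J.timeDeriv X) X.2
  continuousOn_val : ContinuousOn J.val Q
  continuousOn_timeDeriv : ContinuousOn J.timeDeriv Q

variable {J : Jet E} {Q : Set (E × ℝ)} {K U Ξ : Set E} {t₀ t₁ η : ℝ}

lemma Jet.IsRegularOn.mono {Q' : Set (E × ℝ)} (hJ : J.IsRegularOn Q) (hQ : Q' ⊆ Q) :
    J.IsRegularOn Q' where
  hasFDerivAt_val X hX := hJ.hasFDerivAt_val X (hQ hX)
  hasFDerivAt_grad X hX := hJ.hasFDerivAt_grad X (hQ hX)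
  hasDerivAt_val X hX := hJ.hasDerivAt_val X (hQ hX)
  continuousOn_val := hJ.continuousOn_val.mono hQ
  continuousOn_timeDeriv := hJ.continuousOn_timeDeriv.mono hQ

lemma Jet.IsRegularOn.exists_timeDeriv_lt_of_val_lt (hJ : J.IsRegularOn (K ×ˢ Icc t₀ t₁))
    (hK : IsCompact K) (hη : 0 < η) :
    ∃ δ > 0, ∀ x ∈ K, ∀ s ∈ Icc t₀ t₁, ∀ t ∈ Icc t₀ t₁, s < t → t - s ≤ δ →
      J.val (x, t) < J.val (x, s) → J.timeDeriv (x, t) < η := by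
  obtain ⟨ε, hε, hunif⟩ := Metric.uniformContinuousOn_iff.1
    ((hK.prod isCompact_Icc).uniformContinuousOn_of_continuous hJ.continuousOn_timeDeriv) η hη
  refine ⟨ε / 2, half_pos hε, fun x hx s hs t ht hst hδ hval => ?_⟩
  have hIcc : Icc s t ⊆ Icc t₀ t₁ := Icc_subset_Icc hs.1 ht.2
  obtain ⟨z, hz, hslope⟩ := exists_hasDerivAt_eq_slope (fun t => J.val (x, t))
    (fun t => J.timeDeriv (x, t)) hst
    (fun z hz => (hJ.hasDerivAt_val (x, z) ⟨hx, hIcc hz⟩).continuousAt.continuousWithinAt)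
    (fun z hz => hJ.hasDerivAt_val (x, z) ⟨hx, hIcc (Ioo_subset_Icc_self hz)⟩)
  have hneg : J.timeDeriv (x, z) < 0 :=
    hslope.trans_lt (div_neg_of_neg_of_pos (sub_neg.2 hval) (sub_pos.2 hst))
  have hdist : dist (x, t) (x, z) < ε := by
    rw [Prod.dist_eq, dist_self, Real.dist_eq, abs_of_pos (sub_pos.2 hz.2)]
    exact max_lt hε (by linarith [hz.1])
  have hclose := hunif (x, t) ⟨hx, ht⟩ (x, z) ⟨hx, hIcc (Ioo_subset_Icc_self hz)⟩ hdist
  rw [Real.dist_eq] at hclose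
  linarith [(abs_lt.1 hclose).2]

variable [FiniteDimensional ℝ E] [MeasurableSpace E] [BorelSpace E] {b d H ρ : ℝ} {m : ℕ}
  {B : E → ℝ≥0∞}

/- Follows from the discrete version on a fine time mesh: a drop of the value over one step forces
the time derivative at the end of the step to be less than `η`. -/
lemma Jet.IsRegularOn.ofReal_mul_measure_le_of_contact (hJ : J.IsRegularOn (K ×ˢ Icc t₀ t₁))
    (μ : Measure E) [μ.IsAddHaarMeasure] (hb : 0 < b) (hm : m ≠ 0) (hH : 0 ≤ H) (hη : 0 < η)
    (ht : t₀ ≤ t₁) (hK : IsCompact K) (hne : K.Nonempty) (hU : IsOpen U) (hUK : U ⊆ K)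
    (hΞ : MeasurableSet Ξ) (hlow : ∀ X ∈ U ×ˢ Icc t₀ t₁, -H ≤ J.val X)
    (hstart : ∀ ξ ∈ Ξ, ∀ x ∈ K, 0 ≤ J.val (x, t₀) + powerPotential b m (x - ξ))
    (hend : ∀ ξ ∈ Ξ, ∃ x ∈ K, J.val (x, t₁) + powerPotential b m (x - ξ) ≤ -d)
    (hinside : ∀ ξ ∈ Ξ, ∀ X ∈ K ×ˢ Icc t₀ t₁, J.val X + powerPotential b m (X.1 - ξ) < 0 →
      X.1 ∈ U ∧ ‖ξ - X.1‖ ≤ ρ)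
    (hcontact : ∀ ξ ∈ Ξ, ∀ X ∈ U ×ˢ Ioc t₀ t₁, J.val X + powerPotential b m (X.1 - ξ) < 0 →
      J.timeDeriv X < η → J.grad X = powerGrad b m (ξ - X.1) →
      (J.hess X + powerHess b m (ξ - X.1)).IsPositive →
      HasDetBound (B X.1) (J.grad X) (J.hess X + powerHess b m (ξ - X.1))) :
    ENNReal.ofReal d * μ Ξ ≤
      ENNReal.ofReal H * ENNReal.ofReal (ρ ^ Module.finrank ℝ E / (2 * m + 1)) *
        ∫⁻ x in U, B x ^ Module.finrank ℝ E ∂μ := by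
  obtain ⟨δ, hδ, htime⟩ := hJ.exists_timeDeriv_lt_of_val_lt hK hη
  set τ : ℕ → Icc t₀ t₁ := Icc.addNSMul ht δ
  have hmono : Monotone τ := Icc.monotone_addNSMul ht hδ.le
  obtain ⟨N, hN⟩ := Icc.addNSMul_eq_right ht hδ
  have hτ₀ : (τ 0 : ℝ) = t₀ := Icc.addNSMul_zero ht
  have hτN : (τ N : ℝ) = t₁ := hN N le_rfl
  have hslice : ∀ i, ∀ x ∈ U, (x, (τ i : ℝ)) ∈ K ×ˢ Icc t₀ t₁ :=
    fun i x hx => ⟨hUK hx, (τ i).2⟩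
  refine ofReal_mul_measure_le_of_seq_contact (w := fun i x => J.val (x, τ i))
    (q := fun i x => J.grad (x, τ i)) (M := fun i x => J.hess (x, τ i)) (N := N)
    μ hb hm hH hK hne hU hUK hΞ
    (fun i => hJ.continuousOn_val.comp (by fun_prop) fun x hx => ⟨hx, (τ i).2⟩)
    (fun i x hx => hJ.hasFDerivAt_val _ (hslice i x hx))
    (fun i x hx => hJ.hasFDerivAt_grad _ (hslice i x hx))
    (fun i x hx => hlow _ ⟨hx, (τ i).2⟩) (hτ₀.symm ▸ hstart) (hτN.symm ▸ hend)
    (fun i ξ hξ x hx => hinside ξ hξ _ ⟨hx, (τ i).2⟩) fun i ξ hξ x hx hneg hdrop => ?_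
  have hlt : (τ i : ℝ) < τ (i + 1) := lt_of_le_of_ne (hmono i.le_succ)
    fun h => hdrop.ne (by rw [h])
  refine hcontact ξ hξ (x, τ (i + 1)) ⟨hx, (τ i).2.1.trans_lt hlt, (τ (i + 1)).2.2⟩ hneg ?_
  refine htime x (hUK hx) _ (τ i).2 _ (τ (i + 1)).2 hlt ?_ hdrop
  exact (le_abs_self _).trans
    (Icc.abs_sub_addNSMul_le ht hδ.le i ⟨hmono i.le_succ, le_rfl⟩)

end Jet

section Ellipticity

variable {ν : ℝ} {A : Matrix (Fin n) (Fin n) ℝ} {T : En n →L[ℝ] En n}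

/-- The pointwise form of `UnifParabolic`: `A` has smallest eigenvalue at least `ν⁻¹` and Frobenius
norm at most `ν`. -/
def IsElliptic (ν : ℝ) (A : Matrix (Fin n) (Fin n) ℝ) : Prop :=
  (∀ ξ : Fin n → ℝ, ν⁻¹ * (∑ i, ξ i ^ 2) ≤ ∑ i, ∑ j, A i j * ξ i * ξ j) ∧
    (∑ i, ∑ j, (A i j) ^ 2) ≤ ν ^ 2

/-- The functional `T ↦ ∑ A i j T i j`, the second-order part of the operator `L` when `T` is the
Hessian. -/
def traceMul (A : Matrix (Fin n) (Fin n) ℝ) : (En n →L[ℝ] En n) →ₗ[ℝ] ℝ where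
  toFun T := ∑ i, ∑ j, A i j * T (EuclideanSpace.single i 1) j
  map_add' T T' := by simp [mul_add, Finset.sum_add_distrib]
  map_smul' c T := by simp [Finset.mul_sum, mul_left_comm]

lemma traceMul_apply (A : Matrix (Fin n) (Fin n) ℝ) (T : En n →L[ℝ] En n) :
    traceMul A T = ∑ i, ∑ j, A i j * T (EuclideanSpace.single i 1) j := rfl

lemma traceMul_rankOne_self (A : Matrix (Fin n) (Fin n) ℝ) (v : En n) :
    traceMul A (InnerProductSpace.rankOne ℝ v v) = ∑ i, ∑ j, A i j * v i * v j := by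
  simp [traceMul_apply, InnerProductSpace.rankOne_apply, EuclideanSpace.inner_single_right,
    mul_assoc]

lemma continuous_traceMul :
    Continuous fun P : Matrix (Fin n) (Fin n) ℝ × (En n →L[ℝ] En n) => traceMul P.1 P.2 := by
  simp only [traceMul_apply]
  fun_prop

lemma IsElliptic.le_traceMul_rankOne_self (hA : IsElliptic ν A) (v : En n) :
    ν⁻¹ * ‖v‖ ^ 2 ≤ traceMul A (InnerProductSpace.rankOne ℝ v v) := by
  rw [traceMul_rankOne_self, EuclideanSpace.real_norm_sq_eq]
  exact hA.1 v

lemma IsElliptic.traceMul_rankOne_self_le (hA : IsElliptic ν A) (hν : 0 ≤ ν) (v : En n) :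
    traceMul A (InnerProductSpace.rankOne ℝ v v) ≤ ν * ‖v‖ ^ 2 := by
  refine (abs_le_of_sq_le_sq' ?_ (by positivity)).2
  have hcauchy := Finset.sum_mul_sq_le_sq_mul_sq (Finset.univ : Finset (Fin n × Fin n))
    (fun k => A k.1 k.2) fun k => v k.1 * v k.2
  simp only [Fintype.sum_prod_type, mul_pow, ← Finset.sum_mul_sum, ← sq,
    ← EuclideanSpace.real_norm_sq_eq] at hcauchy
  calc traceMul A (InnerProductSpace.rankOne ℝ v v) ^ 2
      = (∑ i, ∑ j, A i j * (v i * v j)) ^ 2 := by simp only [traceMul_rankOne_self, mul_assoc]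
    _ ≤ (∑ i, ∑ j, A i j ^ 2) * (‖v‖ ^ 2) ^ 2 := hcauchy
    _ ≤ ν ^ 2 * (‖v‖ ^ 2) ^ 2 := by gcongr; exact hA.2
    _ = (ν * ‖v‖ ^ 2) ^ 2 := by ring

lemma IsElliptic.le_traceMul (hA : IsElliptic ν A) (hT : T.IsPositive) :
    ν⁻¹ * LinearMap.trace ℝ (En n) T ≤ traceMul A T := by
  obtain ⟨ι, v, rfl⟩ := ContinuousLinearMap.isPositive_iff_eq_sum_rankOne.1 hT
  simp only [ContinuousLinearMap.toLinearMap_sum, map_sum, InnerProductSpace.trace_rankOne,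
    real_inner_self_eq_norm_sq, Finset.mul_sum]
  exact Finset.sum_le_sum fun k _ => hA.le_traceMul_rankOne_self (v k)

lemma IsElliptic.traceMul_le (hA : IsElliptic ν A) (hν : 0 ≤ ν) (hT : T.IsPositive) :
    traceMul A T ≤ ν * LinearMap.trace ℝ (En n) T := by
  obtain ⟨ι, v, rfl⟩ := ContinuousLinearMap.isPositive_iff_eq_sum_rankOne.1 hT
  simp only [ContinuousLinearMap.toLinearMap_sum, map_sum, InnerProductSpace.trace_rankOne,
    real_inner_self_eq_norm_sq, Finset.mul_sum]
  exact Finset.sum_le_sum fun k _ => hA.traceMul_rankOne_self_le hν (v k)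

lemma isCompact_setOf_isElliptic (ν : ℝ) :
    IsCompact {A : Matrix (Fin n) (Fin n) ℝ | IsElliptic ν A} := by
  have hclosed : IsClosed {A : Matrix (Fin n) (Fin n) ℝ | IsElliptic ν A} := by
    simp only [IsElliptic, ofPred_and, ofPred_forall]
    exact (isClosed_iInter fun ξ => isClosed_le (by fun_prop) (by fun_prop)).inter
      (isClosed_le (by fun_prop) (by fun_prop))
  refine (isCompact_univ_pi fun _ => isCompact_univ_pi fun _ =>
    (isCompact_Icc (a := -|ν|) (b := |ν|))).of_isClosed_subset hclosed fun A hA i _ j _ => ?_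
  refine abs_le.1 (sq_le_sq.1 (le_trans ?_ hA.2))
  calc A i j ^ 2 ≤ ∑ j, A i j ^ 2 :=
        Finset.single_le_sum (fun j _ => sq_nonneg (A i j)) (Finset.mem_univ j)
    _ ≤ ∑ i, ∑ j, A i j ^ 2 :=
        Finset.single_le_sum (f := fun i => ∑ j, A i j ^ 2)
          (fun i _ => Finset.sum_nonneg fun j _ => sq_nonneg (A i j)) (Finset.mem_univ i)

lemma det_le_trace_pow_finrank {E : Type*} [NormedAddCommGroup E] [InnerProductSpace ℝ E]
    [FiniteDimensional ℝ E] {T : E →L[ℝ] E} (hT : T.IsPositive) :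
    T.det ≤ LinearMap.trace ℝ E T ^ Module.finrank ℝ E := by
  have hnonneg := hT.toLinearMap.nonneg_eigenvalues rfl
  calc T.det = ∏ i, hT.toLinearMap.isSymmetric.eigenvalues rfl i :=
        hT.toLinearMap.isSymmetric.det_eq_prod_eigenvalues rfl
    _ ≤ ∏ _i : Fin (Module.finrank ℝ E), LinearMap.trace ℝ E T := by
        rw [hT.toLinearMap.isSymmetric.trace_eq_sum_eigenvalues rfl]
        exact Finset.prod_le_prod (fun i _ => hnonneg i)
          fun i _ => Finset.single_le_sum (fun i _ => hnonneg i) (Finset.mem_univ i)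
    _ = LinearMap.trace ℝ E T ^ Module.finrank ℝ E := by simp

variable {β : ℝ≥0∞} {p b : ℝ} {m : ℕ} {q y : En n} {M : En n →L[ℝ] En n}

/-- The differential inequality `P⁻(M) ≤ p + β ‖q‖`, where `P⁻` is the minimal Pucci operator over
the matrices satisfying `IsElliptic ν`. A drift with no finite bound only matters if `q ≠ 0`. -/
def PucciLE (ν : ℝ) (β : ℝ≥0∞) (p : ℝ) (q : En n) (M : En n →L[ℝ] En n) : Prop :=
  (β ≠ ∞ ∨ q = 0) → ∃ A, IsElliptic ν A ∧ traceMul A M ≤ p + β.toReal * ‖q‖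

lemma PucciLE.smul (h : PucciLE ν β p q M) {k : ℝ} (hk : 0 < k) :
    PucciLE ν β (k * p) (k • q) (k • M) := by
  intro hβ
  obtain ⟨A, hA, hle⟩ := h (hβ.imp_right fun hq => (smul_eq_zero_iff_right hk.ne').1 hq)
  refine ⟨A, hA, ?_⟩
  rw [map_smul, smul_eq_mul, norm_smul, Real.norm_of_nonneg hk.le]
  linarith [mul_le_mul_of_nonneg_left hle hk.le]

lemma isClosed_setOf_pucciLE (ν : ℝ) (hβ : β ≠ ∞) :
    IsClosed {P : ℝ × En n × (En n →L[ℝ] En n) | PucciLE ν β P.1 P.2.1 P.2.2} := by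
  have : CompactSpace {A : Matrix (Fin n) (Fin n) ℝ | IsElliptic ν A} :=
    isCompact_iff_compactSpace.1 (isCompact_setOf_isElliptic ν)
  have htrace : Continuous fun P : {A : Matrix (Fin n) (Fin n) ℝ | IsElliptic ν A} ×
      (ℝ × En n × (En n →L[ℝ] En n)) => traceMul (P.1 : Matrix (Fin n) (Fin n) ℝ) P.2.2.2 :=
    continuous_traceMul.comp ((continuous_subtype_val.comp continuous_fst).prodMk (by fun_prop))
  convert isClosedMap_snd_of_compactSpace _ (isClosed_le htrace
    (g := fun P => P.2.1 + β.toReal * ‖P.2.2.1‖) (by fun_prop)) using 1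
  ext P
  constructor
  · intro hP
    obtain ⟨A, hA, hle⟩ := hP (.inl hβ)
    exact ⟨⟨⟨A, hA⟩, P⟩, hle, rfl⟩
  · rintro ⟨⟨A, P⟩, hle, rfl⟩ -
    exact ⟨A, A.2, hle⟩

/-- The excess of the gain `ν⁻¹ ‖q‖²` over the loss `P⁺(powerHess b m y)`, both bounded in terms of
`Y = ‖y‖`, for `q = powerGrad b m y`. -/
def barrierGap (ν : ℝ) (n m : ℕ) (b Y : ℝ) : ℝ :=
  ν⁻¹ * (b * Y ^ (2 * m + 1)) ^ 2 - ν * (b * Y ^ (2 * m) * (n + 2 * m))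

lemma IsElliptic.barrierGap_le (hA : IsElliptic ν A) (hν : 0 ≤ ν) (hb : 0 ≤ b) (hm : m ≠ 0)
    (y : En n) :
    barrierGap ν n m b ‖y‖ ≤
      traceMul A (InnerProductSpace.rankOne ℝ (powerGrad b m y) (powerGrad b m y)) -
        traceMul A (powerHess b m y) := by
  have hgain := hA.le_traceMul_rankOne_self (powerGrad b m y)
  have hloss := hA.traceMul_le hν (isPositive_powerHess hb m y)
  rw [norm_powerGrad hb] at hgain
  rw [trace_powerHess b hm, finrank_euclideanSpace_fin] at hloss
  rw [barrierGap]
  linarith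

lemma PucciLE.exists_traceMul_lt
    (h : PucciLE ν β p (powerGrad b m y)
      (M + InnerProductSpace.rankOne ℝ (powerGrad b m y) (powerGrad b m y)))
    (hβ : β ≠ ∞ ∨ powerGrad b m y = 0) (hν : 0 ≤ ν) (hb : 0 ≤ b) (hm : m ≠ 0)
    (hgap : p < barrierGap ν n m b ‖y‖) :
    ∃ A, IsElliptic ν A ∧
      traceMul A (M + powerHess b m y) < β.toReal * ‖powerGrad b m y‖ := by
  obtain ⟨A, hA, hle⟩ := h hβ
  refine ⟨A, hA, ?_⟩
  rw [map_add] at hle ⊢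
  linarith [hA.barrierGap_le hν hb hm y]

lemma PucciLE.hasDetBound
    (h : PucciLE ν β p (powerGrad b m y)
      (M + InnerProductSpace.rankOne ℝ (powerGrad b m y) (powerGrad b m y)))
    (hpos : (M + powerHess b m y).IsPositive) (hν : 0 < ν) (hb : 0 ≤ b) (hm : m ≠ 0)
    (hgap : p < barrierGap ν n m b ‖y‖) :
    HasDetBound (ENNReal.ofReal ν * β) (powerGrad b m y) (M + powerHess b m y) := by
  have htrace := hpos.toLinearMap.trace_nonneg
  refine ⟨fun hq => ?_, fun hβ => ?_⟩
  · obtain ⟨A, hA, hlt⟩ := h.exists_traceMul_lt (.inr hq) hν.le hb hm hgap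
    rw [hq, norm_zero, mul_zero] at hlt
    exact hlt.not_ge ((mul_nonneg (inv_nonneg.2 hν.le) htrace).trans (hA.le_traceMul hpos))
  · have hβ' : β ≠ ∞ := fun h => hβ (h ▸ ENNReal.mul_top (ENNReal.ofReal_pos.2 hν).ne')
    obtain ⟨A, hA, hlt⟩ := h.exists_traceMul_lt (.inl hβ') hν.le hb hm hgap
    have hle := (inv_mul_le_iff₀ hν).1 ((hA.le_traceMul hpos).trans hlt.le)
    rw [ENNReal.toReal_mul, ENNReal.toReal_ofReal hν.le, mul_assoc]
    exact (det_le_trace_pow_finrank hpos).trans (pow_le_pow_left₀ htrace hle _)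

lemma barrierGap_div_pow {ρ : ℝ} (hρ : ρ ≠ 0) (ν : ℝ) (n m : ℕ) (b Y : ℝ) :
    barrierGap ν n m (b / ρ ^ (2 * m + 2)) Y = barrierGap ν n m b (Y / ρ) / ρ ^ 2 := by
  have hpow : ρ ^ (2 * m + 2) = ρ ^ (2 * m) * ρ ^ 2 := pow_add _ _ _
  simp only [barrierGap, div_pow, hpow, pow_succ Y, pow_succ ρ (2 * m)]
  field_simp

lemma barrierGap_mul (ν : ℝ) (n m : ℕ) (c H z : ℝ) :
    barrierGap ν n m (c * H) z =
      H * (ν⁻¹ * c ^ 2 * H * (z ^ (2 * m + 1)) ^ 2 - ν * c * (n + 2 * m) * z ^ (2 * m)) := by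
  rw [barrierGap]
  ring

lemma eventually_neg_mul_le_barrierGap (hν : 0 < ν) (hm : m ≠ 0) {c ε : ℝ} (hc : 0 < c)
    (hε : 0 < ε) :
    ∀ᶠ H in Filter.atTop, ∀ z ∈ Icc (0 : ℝ) 1, -(ε * H) ≤ barrierGap ν n m (c * H) z := by
  have : (0 : ℝ) < m := by exact_mod_cast hm.bot_lt
  set γ : ℝ := ν * c * (n + 2 * m)
  have hγ : 0 < γ := by positivity
  set σ : ℝ := ε / γ
  have : 0 < σ := by positivity
  filter_upwards [Filter.eventually_ge_atTop (γ / (ν⁻¹ * c ^ 2 * σ ^ 2)),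
    Filter.eventually_ge_atTop 0] with H hH hH₀ z ⟨hz₀, hz₁⟩
  rw [div_le_iff₀ (by positivity)] at hH
  rw [barrierGap_mul, ← neg_mul, mul_comm (-ε)]
  refine mul_le_mul_of_nonneg_left ?_ hH₀
  rcases le_total (z ^ (2 * m)) σ with hz | hz
  · have hloss : γ * z ^ (2 * m) ≤ γ * σ := by gcongr
    have hgain : 0 ≤ ν⁻¹ * c ^ 2 * H * (z ^ (2 * m + 1)) ^ 2 := by positivity
    linarith [mul_div_cancel₀ ε hγ.ne']
  · have hcube : (z ^ (2 * m)) ^ 3 ≤ (z ^ (2 * m + 1)) ^ 2 := by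
      rw [← pow_mul, ← pow_mul]
      exact pow_le_pow_of_le_one hz₀ hz₁ (by omega)
    have hgain : γ * z ^ (2 * m) ≤ ν⁻¹ * c ^ 2 * H * (z ^ (2 * m + 1)) ^ 2 := calc
      γ * z ^ (2 * m) ≤ H * (ν⁻¹ * c ^ 2 * (z ^ (2 * m)) ^ 2) * z ^ (2 * m) := by
        gcongr
        exact hH.trans (by gcongr)
      _ = ν⁻¹ * c ^ 2 * H * (z ^ (2 * m)) ^ 3 := by ring
      _ ≤ _ := by gcongr
    linarith

lemma eventually_mul_le_barrierGap (hν : 0 < ν) {c z₀ : ℝ} (hc : 0 < c) (hz₀ : 0 < z₀) (C : ℝ) :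
    ∀ᶠ H in Filter.atTop, ∀ z ∈ Icc z₀ 1, C * H ≤ barrierGap ν n m (c * H) z := by
  set σ : ℝ := ν⁻¹ * c ^ 2 * (z₀ ^ (2 * m + 1)) ^ 2
  have hσ : 0 < σ := by positivity
  filter_upwards [Filter.eventually_ge_atTop ((C + ν * c * (n + 2 * m)) / σ),
    Filter.eventually_ge_atTop 0] with H hH hH₀ z ⟨hz, hz₁⟩
  rw [div_le_iff₀ hσ] at hH
  have hz' : 0 ≤ z := hz₀.le.trans hz
  rw [barrierGap_mul, mul_comm C]
  refine mul_le_mul_of_nonneg_left ?_ hH₀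
  have hgain : H * σ ≤ ν⁻¹ * c ^ 2 * H * (z ^ (2 * m + 1)) ^ 2 := calc
    H * σ = ν⁻¹ * c ^ 2 * H * (z₀ ^ (2 * m + 1)) ^ 2 := by ring
    _ ≤ _ := by gcongr
  have hloss : ν * c * (n + 2 * m) * z ^ (2 * m) ≤ ν * c * (n + 2 * m) :=
    mul_le_of_le_one_right (by positivity) (pow_le_one₀ hz' hz₁)
  linarith

end Ellipticity

section BarrierEstimate

variable {ν H ρ η g : ℝ} {S : NNReal} {m : ℕ} {β : En n → ℝ≥0∞} {W : Jet (En n)} {c : En n}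
  {t₀ t₁ : ℝ}

/-- The coefficient `b` for which `powerPotential b m y = 2 H (‖y‖ / ρ) ^ (2 m + 2)`. -/
def barrierCoeff (m : ℕ) (H ρ : ℝ) : ℝ := 4 * (m + 1) * H / ρ ^ (2 * m + 2)

lemma barrierCoeff_pos (m : ℕ) (hH : 0 < H) (hρ : 0 < ρ) : 0 < barrierCoeff m H ρ := by
  unfold barrierCoeff
  positivity

lemma barrierGap_barrierCoeff (hρ : ρ ≠ 0) (ν : ℝ) (n m : ℕ) (H Y : ℝ) :
    barrierGap ν n m (barrierCoeff m H ρ) Y =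
      barrierGap ν n m (4 * (m + 1) * H) (Y / ρ) / ρ ^ 2 :=
  barrierGap_div_pow hρ ν n m _ Y

lemma barrierCoeff_div_mul_pow (m : ℕ) (H ρ r : ℝ) :
    barrierCoeff m H ρ / (2 * (m + 1)) * r ^ (2 * (m + 1)) = 2 * H * (r / ρ) ^ (2 * m + 2) := by
  rw [barrierCoeff, div_pow, ← mul_add_one 2 m]
  field_simp
  ring

lemma le_powerPotential_barrierCoeff (m : ℕ) (hH : 0 < H) (hρ : 0 < ρ) {y : En n}
    (hy : ρ ≤ ‖y‖) : 2 * H ≤ powerPotential (barrierCoeff m H ρ) m y := by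
  have hle := le_powerPotential_of_le_norm (m := m) (barrierCoeff_pos m hH hρ).le hρ.le hy
  rwa [barrierCoeff_div_mul_pow, div_self hρ.ne', one_pow, mul_one] at hle

lemma powerPotential_barrierCoeff_le (m : ℕ) (hH : 0 < H) (hρ : 0 < ρ) {y : En n} {θ : ℝ}
    (hy : ‖y‖ ≤ θ * ρ) :
    powerPotential (barrierCoeff m H ρ) m y ≤ 2 * H * θ ^ (2 * m + 2) := by
  have hle := powerPotential_le_of_norm_le (m := m) (barrierCoeff_pos m hH hρ).le hy
  rwa [barrierCoeff_div_mul_pow, mul_div_cancel_right₀ _ hρ.ne'] at hle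

/-- The barrier exponent `m` is so large that the measure estimate with drift bound `S` cannot hold
for barriers centred in a ball of radius `ρ / 16`. -/
structure IsLargeExponent (ν : ℝ) (S : NNReal) (n m : ℕ) : Prop where
  ne_zero : m ≠ 0
  pow_le : (3 / 4 : ℝ) ^ (2 * m + 2) ≤ 1 / 16
  lt_volume : 2 * (16 * ν) ^ n * S < (2 * m + 1) * volume.real (ball (0 : En n) 1)

lemma exists_isLargeExponent (ν : ℝ) (S : NNReal) (n : ℕ) : ∃ m, IsLargeExponent ν S n m := by
  have hvol : 0 < volume.real (ball (0 : En n) 1) :=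
    ENNReal.toReal_pos (measure_ball_pos _ _ one_pos).ne' measure_ball_lt_top.ne
  obtain ⟨k, hk⟩ := exists_nat_gt (2 * (16 * ν) ^ n * S / volume.real (ball (0 : En n) 1))
  refine ⟨k + 5, by omega, ?_, ?_⟩
  · calc (3 / 4 : ℝ) ^ (2 * (k + 5) + 2) ≤ (3 / 4 : ℝ) ^ 12 :=
          pow_le_pow_of_le_one (by norm_num) (by norm_num) (by omega)
      _ ≤ 1 / 16 := by norm_num
  · rw [div_lt_iff₀ hvol] at hk
    refine hk.trans_le ?_
    gcongr
    push_cast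
    linarith [k.cast_nonneg (α := ℝ)]

lemma IsLargeExponent.lt_ofReal_mul_volume_ball (hm : IsLargeExponent ν S n m) (hν : 0 ≤ ν)
    (hH : 0 < H) (hρ : 0 < ρ) (hβ : ∫⁻ x, β x ^ n ≤ S) (c : En n) (U : Set (En n)) :
    ENNReal.ofReal H * ENNReal.ofReal (ρ ^ n / (2 * m + 1)) *
        ∫⁻ x in U, (ENNReal.ofReal ν * β x) ^ n <
      ENNReal.ofReal (H / 2) * volume (ball c (ρ / 16)) := by
  have hdrift : ∫⁻ x in U, (ENNReal.ofReal ν * β x) ^ n ≤ ENNReal.ofReal (ν ^ n * S) := by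
    simp only [mul_pow]
    rw [lintegral_const_mul' _ _ (by finiteness), ENNReal.ofReal_mul (by positivity),
      ENNReal.ofReal_pow hν, ENNReal.ofReal_coe_nnreal]
    gcongr
    exact (setLIntegral_le_lintegral U _).trans hβ
  have hball : volume (ball c (ρ / 16)) =
      ENNReal.ofReal ((ρ / 16) ^ n * volume.real (ball (0 : En n) 1)) := by
    rw [Measure.addHaar_ball_of_pos _ _ (by positivity), ENNReal.ofReal_mul (by positivity),
      finrank_euclideanSpace_fin, ofReal_measureReal measure_ball_lt_top.ne]
  have hvol := hm.lt_volume
  set ω := volume.real (ball (0 : En n) 1)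
  calc ENNReal.ofReal H * ENNReal.ofReal (ρ ^ n / (2 * m + 1)) *
        ∫⁻ x in U, (ENNReal.ofReal ν * β x) ^ n
      ≤ ENNReal.ofReal H * ENNReal.ofReal (ρ ^ n / (2 * m + 1)) * ENNReal.ofReal (ν ^ n * S) := by
        gcongr
    _ = ENNReal.ofReal (H * (ρ / 16) ^ n / (2 * (2 * m + 1)) * (2 * (16 * ν) ^ n * S)) := by
        rw [← ENNReal.ofReal_mul hH.le, ← ENNReal.ofReal_mul (by positivity), div_pow, mul_pow]
        congr 1
        field_simp
    _ < ENNReal.ofReal (H * (ρ / 16) ^ n / (2 * (2 * m + 1)) * ((2 * m + 1) * ω)) := by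
        have hω : 0 < ω := by
          have hnonneg : 0 ≤ 2 * (16 * ν) ^ n * S := by positivity
          exact pos_of_mul_pos_right (hnonneg.trans_lt hvol) (by positivity)
        rw [ENNReal.ofReal_lt_ofReal_iff (by positivity)]
        gcongr
    _ = ENNReal.ofReal (H / 2) * volume (ball c (ρ / 16)) := by
        rw [hball, ← ENNReal.ofReal_mul (by positivity)]
        congr 1
        field_simp

lemma norm_sub_lt_of_add_powerPotential_neg (hH : 0 < H) (hρ : 0 < ρ) {w : ℝ} (hw : -H ≤ w)
    {x ξ : En n} (hneg : w + powerPotential (barrierCoeff m H ρ) m (x - ξ) < 0) :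
    ‖ξ - x‖ < ρ := by
  by_contra! hle
  rw [norm_sub_rev] at hle
  linarith [le_powerPotential_barrierCoeff m hH hρ hle]

/- If the conclusion failed at `x`, then every `ξ` in the ball of radius `ρ / 16` would centre a
barrier whose contact with `W` contradicts the measure estimate. -/
lemma Jet.IsRegularOn.neg_mul_lt_val (hm : IsLargeExponent ν S n m) (hν : 0 < ν) (hH : 0 < H)
    (hρ : 0 < ρ) (hη : 0 < η) (ht : t₀ ≤ t₁) (hβ : ∫⁻ x, β x ^ n ≤ S)
    (hW : W.IsRegularOn (closedBall c (4 / 3 * ρ) ×ˢ Icc t₀ t₁))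
    (hlow : ∀ X ∈ closedBall c (4 / 3 * ρ) ×ˢ Icc t₀ t₁, -H ≤ W.val X)
    (hstart : ∀ x ∈ closedBall c (5 / 4 * ρ), 0 ≤ W.val (x, t₀))
    (hpucci : ∀ X ∈ ball c (4 / 3 * ρ) ×ˢ Ioc t₀ t₁, PucciLE ν (β X.1) (W.timeDeriv X + g)
      (W.grad X) (W.hess X + InnerProductSpace.rankOne ℝ (W.grad X) (W.grad X)))
    (hgap : ∀ ξ ∈ ball c (ρ / 16), ∀ X ∈ ball c (4 / 3 * ρ) ×ˢ Ioc t₀ t₁, ‖ξ - X.1‖ ≤ ρ →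
      0 ≤ W.val X ∨ g + η ≤ barrierGap ν n m (barrierCoeff m H ρ) ‖ξ - X.1‖) :
    ∀ x ∈ closedBall c (11 / 16 * ρ), -(5 / 8 * H) < W.val (x, t₁) := by
  intro x hx
  by_contra! hval
  have hb := barrierCoeff_pos m hH hρ
  have hnear : ∀ {ξ X}, X ∈ closedBall c (4 / 3 * ρ) ×ˢ Icc t₀ t₁ →
      W.val X + powerPotential (barrierCoeff m H ρ) m (X.1 - ξ) < 0 → ‖ξ - X.1‖ < ρ :=
    fun hX => norm_sub_lt_of_add_powerPotential_neg hH hρ (hlow _ hX)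
  have hcontact := hW.ofReal_mul_measure_le_of_contact (U := ball c (4 / 3 * ρ))
    (Ξ := ball c (ρ / 16)) (d := H / 2) (ρ := ρ) (B := fun x => ENNReal.ofReal ν * β x)
    volume hb hm.ne_zero hH.le hη ht
    (isCompact_closedBall c _) ⟨c, mem_closedBall_self (by positivity)⟩ isOpen_ball
    ball_subset_closedBall measurableSet_ball
    (fun X hX => hlow X ⟨ball_subset_closedBall hX.1, hX.2⟩) ?_ ?_ ?_ ?_
  · rw [finrank_euclideanSpace_fin] at hcontact
    exact (hm.lt_ofReal_mul_volume_ball hν.le hH hρ hβ c _).not_ge hcontact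
  · intro ξ hξ z hz
    by_contra! hneg
    have hnorm := hnear (X := (z, t₀)) ⟨hz, left_mem_Icc.2 ht⟩ hneg
    refine hneg.not_ge (add_nonneg (hstart z ?_) (powerPotential_nonneg hb.le))
    rw [norm_sub_rev, ← dist_eq_norm] at hnorm
    rw [mem_closedBall]
    linarith [dist_triangle z ξ c, mem_ball.1 hξ]
  · intro ξ hξ
    refine ⟨x, closedBall_subset_closedBall (by linarith) hx, ?_⟩
    have hdist : ‖x - ξ‖ ≤ 3 / 4 * ρ := by
      rw [← dist_eq_norm]
      linarith [dist_triangle_right x ξ c, mem_ball.1 hξ, mem_closedBall.1 hx]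
    linarith [powerPotential_barrierCoeff_le m hH hρ hdist,
      mul_le_mul_of_nonneg_left hm.pow_le (show 0 ≤ 2 * H by positivity)]
  · intro ξ hξ X hX hneg
    have hnorm := hnear hX hneg
    refine ⟨?_, hnorm.le⟩
    rw [norm_sub_rev, ← dist_eq_norm] at hnorm
    rw [mem_ball]
    linarith [dist_triangle X.1 ξ c, mem_ball.1 hξ]
  · intro ξ hξ X hX hneg htime hgrad hpos
    have hnorm := hnear ⟨ball_subset_closedBall hX.1, Ioc_subset_Icc_self hX.2⟩ hneg
    have hval : W.val X < 0 := by linarith [powerPotential_nonneg (m := m) hb.le (y := X.1 - ξ)]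
    have hgap' := (hgap ξ hξ X hX hnorm.le).resolve_left hval.not_ge
    have hp := hpucci X hX
    rw [hgrad] at hp ⊢
    exact hp.hasDetBound hpos hν hb.le hm.ne_zero (by linarith)

end BarrierEstimate

section LogTransform

variable {E : Type*} [NormedAddCommGroup E] [InnerProductSpace ℝ E] {J : Jet E}
  {Q : Set (E × ℝ)}

/-- The jet of `log (u + δ)`, where `u` is the value of `J`. -/
def Jet.logAddConst (J : Jet E) (δ : ℝ) : Jet E where
  val X := Real.log (J.val X + δ)
  timeDeriv X := (J.val X + δ)⁻¹ * J.timeDeriv X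
  grad X := (J.val X + δ)⁻¹ • J.grad X
  hess X := (J.val X + δ)⁻¹ • J.hess X -
    InnerProductSpace.rankOne ℝ ((J.val X + δ)⁻¹ • J.grad X) ((J.val X + δ)⁻¹ • J.grad X)

/-- The jet of `u (x, t) - (a + g * (t - t₀))`, where `u` is the value of `J`. -/
def Jet.subAffine (J : Jet E) (a g t₀ : ℝ) : Jet E where
  val X := J.val X - (a + g * (X.2 - t₀))
  timeDeriv X := J.timeDeriv X - g
  grad := J.grad
  hess := J.hess

lemma Jet.IsRegularOn.subAffine (hJ : J.IsRegularOn Q) (a g t₀ : ℝ) :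
    (J.subAffine a g t₀).IsRegularOn Q where
  hasFDerivAt_val X hX := (hJ.hasFDerivAt_val X hX).sub_const (a + g * (X.2 - t₀))
  hasFDerivAt_grad := hJ.hasFDerivAt_grad
  hasDerivAt_val X hX := by
    have haffine : HasDerivAt (fun t => a + g * (t - t₀)) g X.2 := by
      simpa only [mul_one, id_eq] using
        (((hasDerivAt_id X.2).sub_const t₀).const_mul g).const_add a
    exact (hJ.hasDerivAt_val X hX).sub haffine
  continuousOn_val := hJ.continuousOn_val.sub (by fun_prop)
  continuousOn_timeDeriv := hJ.continuousOn_timeDeriv.sub continuousOn_const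

lemma Jet.IsRegularOn.logAddConst (hJ : J.IsRegularOn Q) {δ : ℝ}
    (hpos : ∀ X ∈ Q, 0 < J.val X + δ) : (J.logAddConst δ).IsRegularOn Q where
  hasFDerivAt_val X hX := by
    have hlog := ((hJ.hasFDerivAt_val X hX).add_const δ).log (hpos X hX).ne'
    rwa [← map_smul] at hlog
  hasFDerivAt_grad X hX := by
    have hinv := (hasDerivAt_inv (hpos X hX).ne').comp_hasFDerivAt X.1
      ((hJ.hasFDerivAt_val X hX).add_const δ)
    refine (hinv.smul (hJ.hasFDerivAt_grad X hX)).congr_fderiv ?_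
    ext1 h
    simp [smul_smul, Jet.logAddConst, InnerProductSpace.rankOne_apply, sub_eq_add_neg, sq]
  hasDerivAt_val X hX := by
    have hlog := ((hJ.hasDerivAt_val X hX).add_const δ).log (hpos X hX).ne'
    rwa [div_eq_inv_mul] at hlog
  continuousOn_val :=
    (hJ.continuousOn_val.add continuousOn_const).log fun X hX => (hpos X hX).ne'
  continuousOn_timeDeriv :=
    ((hJ.continuousOn_val.add continuousOn_const).inv₀ fun X hX => (hpos X hX).ne').mul
      hJ.continuousOn_timeDeriv

end LogTransform

section Supersolution

variable {ν H ρ η ℓ g₀ g₁ : ℝ} {S : NNReal} {m : ℕ} {β : En n → ℝ≥0∞} {J : Jet (En n)} {c : En n}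
  {t₀ t₁ : ℝ} {Q : Set (En n × ℝ)}

/-- `J` is the jet on `Q` of a nonnegative supersolution of a parabolic equation with ellipticity
constant `ν` and a drift bounded by `β`, whose `L^n` norm has `n`-th power at most `S`. The
equation is not required at time `0`. -/
structure IsSupersolution (ν : ℝ) (S : NNReal) (β : En n → ℝ≥0∞) (J : Jet (En n))
    (Q : Set (En n × ℝ)) : Prop extends J.IsRegularOn Q where
  nonneg : ∀ X ∈ Q, 0 ≤ J.val X
  pucciLE : ∀ X ∈ Q, 0 < X.2 → PucciLE ν (β X.1) (J.timeDeriv X) (J.grad X) (J.hess X)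
  lintegral_le : ∫⁻ x, β x ^ n ≤ S

lemma log_add_le_log_iff {ℓ γ v : ℝ} (hℓ : 0 < ℓ) (hv : 0 < v) :
    Real.log ℓ + γ ≤ Real.log v ↔ Real.exp γ * ℓ ≤ v := by
  rw [Real.le_log_iff_exp_le hv, Real.exp_add, Real.exp_log hℓ, mul_comm]

/- Adding `e⁻ᴴ ℓ` bounds the logarithm of `u / ℓ` from below by `-H`; the barrier estimate then
improves this bound on a smaller ball to about `-3 H / 4`, which absorbs the added constant. -/
lemma IsSupersolution.exp_neg_mul_le (hJ : IsSupersolution ν S β J Q)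
    (hm : IsLargeExponent ν S n m) (hν : 0 < ν) (hH : 8 ≤ H) (hρ : 0 < ρ) (hη : 0 < η)
    (ht₀ : 0 ≤ t₀) (ht : t₀ ≤ t₁) (hℓ : 0 < ℓ) (hQ : closedBall c (4 / 3 * ρ) ×ˢ Icc t₀ t₁ ⊆ Q)
    (hstart : ∀ x ∈ closedBall c (5 / 4 * ρ),
      Real.exp g₀ * ℓ ≤ J.val (x, t₀) + Real.exp (-H) * ℓ)
    (hnonpos : ∀ t ∈ Icc t₀ t₁, g₀ + g₁ * (t - t₀) ≤ 0)
    (hend : -(H / 8) ≤ g₀ + g₁ * (t₁ - t₀))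
    (hgap : ∀ ξ ∈ ball c (ρ / 16), ∀ X ∈ ball c (4 / 3 * ρ) ×ˢ Ioc t₀ t₁, ‖ξ - X.1‖ ≤ ρ →
      Real.exp (g₀ + g₁ * (X.2 - t₀)) * ℓ ≤ J.val X + Real.exp (-H) * ℓ ∨
        g₁ + η ≤ barrierGap ν n m (barrierCoeff m H ρ) ‖ξ - X.1‖) :
    ∀ x ∈ closedBall c (11 / 16 * ρ), Real.exp (-H) * ℓ ≤ J.val (x, t₁) := by
  intro x hx
  set δ := Real.exp (-H) * ℓ with hδ
  have hδ₀ : 0 < δ := by positivity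
  have hpos : ∀ X ∈ Q, 0 < J.val X + δ := fun X hX =>
    add_pos_of_nonneg_of_pos (hJ.nonneg X hX) hδ₀
  have hlevel : ∀ X ∈ Q, 0 ≤ ((J.logAddConst δ).subAffine (Real.log ℓ + g₀) g₁ t₀).val X ↔
      Real.exp (g₀ + g₁ * (X.2 - t₀)) * ℓ ≤ J.val X + δ := fun X hX => by
    rw [← log_add_le_log_iff hℓ (hpos X hX), ← add_assoc]
    exact sub_nonneg
  have hball : ball c (4 / 3 * ρ) ×ˢ Ioc t₀ t₁ ⊆ Q :=
    (prod_mono ball_subset_closedBall Ioc_subset_Icc_self).trans hQ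
  have hx₁ : (x, t₁) ∈ Q :=
    hQ ⟨closedBall_subset_closedBall (by linarith) hx, right_mem_Icc.2 ht⟩
  have hval := ((hJ.mono hQ).logAddConst fun X hX => hpos X (hQ hX)).subAffine
    (Real.log ℓ + g₀) g₁ t₀ |>.neg_mul_lt_val hm hν (H := H) (by linarith) hρ hη ht hJ.lintegral_le
    ?_ ?_ ?_ ?_ x hx (g := g₁)
  · have hexp : Real.exp (-H + 2) * ℓ ≤ J.val (x, t₁) + δ := by
      rw [← log_add_le_log_iff hℓ (hpos _ hx₁)]
      change -(5 / 8 * H) < Real.log (J.val (x, t₁) + δ) -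
        (Real.log ℓ + g₀ + g₁ * (t₁ - t₀)) at hval
      linarith
    rw [Real.exp_add, mul_right_comm, ← hδ] at hexp
    linarith [mul_le_mul_of_nonneg_left (Real.add_one_le_exp (2 : ℝ)) hδ₀.le]
  · intro X hX
    have hlog : Real.log ℓ + -H ≤ Real.log (J.val X + δ) :=
      (log_add_le_log_iff hℓ (hpos X (hQ hX))).2 (le_add_of_nonneg_left (hJ.nonneg X (hQ hX)))
    change -H ≤ Real.log (J.val X + δ) - (Real.log ℓ + g₀ + g₁ * (X.2 - t₀))
    linarith [hnonpos X.2 hX.2]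
  · intro z hz
    have hz' : z ∈ closedBall c (4 / 3 * ρ) := closedBall_subset_closedBall (by linarith) hz
    rw [hlevel (z, t₀) (hQ ⟨hz', left_mem_Icc.2 ht⟩)]
    simpa only [sub_self, mul_zero, add_zero] using hstart z hz
  · intro X hX
    have hp := (hJ.pucciLE X (hball hX) (ht₀.trans_lt hX.2.1)).smul
      (inv_pos.2 (hpos X (hball hX)))
    simpa only [Jet.subAffine, Jet.logAddConst, sub_add_cancel] using hp
  · intro ξ hξ X hX hle
    rw [hlevel X (hball hX)]
    exact hgap ξ hξ X hX hle

end Supersolution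

section Propagation

variable {ν κ : ℝ} {S : NNReal} {m : ℕ}

lemma exists_mul_le_closedBall (hm : IsLargeExponent ν S n m) (hν : 0 < ν) (hκ : 0 < κ) :
    ∃ C > 0, ∀ {β : En n → ℝ≥0∞} {J : Jet (En n)} {Q : Set (En n × ℝ)} {c : En n}
      {ρ t₀ t₁ ℓ : ℝ}, IsSupersolution ν S β J Q → 0 < ρ → 0 < ℓ → 0 ≤ t₀ → t₀ ≤ t₁ →
      t₁ - t₀ ≤ κ * ρ ^ 2 → closedBall c (4 / 3 * ρ) ×ˢ Icc t₀ t₁ ⊆ Q →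
      (∀ x ∈ closedBall c (5 / 4 * ρ), ℓ ≤ J.val (x, t₀)) →
      ∀ x ∈ closedBall c (11 / 16 * ρ), C * ℓ ≤ J.val (x, t₁) := by
  obtain ⟨H, hgap, hH⟩ := ((eventually_neg_mul_le_barrierGap (n := n) hν hm.ne_zero
    (show (0 : ℝ) < 4 * (m + 1) by positivity) (show 0 < 1 / (16 * κ) by positivity)).and
    (Filter.eventually_ge_atTop 8)).exists
  have : 0 < H := by linarith
  refine ⟨Real.exp (-H), Real.exp_pos _, fun {β J Q c ρ t₀ t₁ ℓ} hJ hρ hℓ ht₀ ht hT hQ hstart => ?_⟩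
  refine hJ.exp_neg_mul_le (g₀ := 0) (g₁ := -(H / (8 * (κ * ρ ^ 2))))
    (η := H / (16 * (κ * ρ ^ 2))) hm hν hH hρ (by positivity) ht₀ ht hℓ hQ ?_ ?_ ?_ ?_
  · intro x hx
    rw [Real.exp_zero, one_mul]
    exact (hstart x hx).trans (le_add_of_nonneg_right (by positivity))
  · intro t ht
    rw [zero_add]
    exact mul_nonpos_of_nonpos_of_nonneg (neg_nonpos.2 (by positivity)) (sub_nonneg.2 ht.1)
  · have hslope : H / (8 * (κ * ρ ^ 2)) * (t₁ - t₀) ≤ H / 8 := calc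
      _ ≤ H / (8 * (κ * ρ ^ 2)) * (κ * ρ ^ 2) := by gcongr
      _ = H / 8 := by field_simp
    linarith
  · intro ξ _ X _ hle
    right
    rw [barrierGap_barrierCoeff hρ.ne', le_div_iff₀ (by positivity)]
    refine le_of_eq_of_le ?_ (hgap _ ⟨by positivity, (div_le_one hρ).2 hle⟩)
    field_simp
    ring

lemma add_le_barrierGap_of_le {H ρ T Y : ℝ} (hκ : 0 < κ) (hH : 0 ≤ H) (hρ : 0 < ρ)
    (hT : κ / 2 * ρ ^ 2 ≤ T) (hY : 3 * ρ / 8 ≤ Y) (hY' : Y ≤ 3 * ρ)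
    (hgap : ∀ z ∈ Icc (1 / 8) 1, (18 / κ + 1) * H ≤ barrierGap ν n m (4 * (m + 1) * H) z) :
    H / T + H / (3 * ρ) ^ 2 ≤ barrierGap ν n m (barrierCoeff m H (3 * ρ)) Y := by
  rw [barrierGap_barrierCoeff (by positivity), le_div_iff₀ (by positivity), add_mul,
    div_mul_cancel₀ _ (by positivity)]
  have hslope : H / T * (3 * ρ) ^ 2 ≤ 18 / κ * H := calc
    _ ≤ H / (κ / 2 * ρ ^ 2) * (3 * ρ) ^ 2 := by gcongr
    _ = 18 / κ * H := by field_simp; ring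
  have hz : Y / (3 * ρ) ∈ Icc (1 / 8) 1 :=
    ⟨by rw [le_div_iff₀ (by positivity)]; linarith, (div_le_one (by positivity)).2 hY'⟩
  linarith [hgap _ hz]

/- A bound spreads from a ball to one of more than the same radius: barriers of a larger radius are
used, and near their centres, where the barrier alone does not suffice, the bound is the one already
propagated by `exists_mul_le_closedBall`. -/
lemma exists_mul_le_closedBall_two_mul (hm : IsLargeExponent ν S n m) (hν : 0 < ν) (hκ : 0 < κ) :
    ∃ C > 0, ∀ {β : En n → ℝ≥0∞} {J : Jet (En n)} {Q : Set (En n × ℝ)} {c : En n}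
      {ρ t₀ t₁ ℓ : ℝ}, IsSupersolution ν S β J Q → 0 < ρ → 0 < ℓ → 0 ≤ t₀ →
      κ / 2 * ρ ^ 2 ≤ t₁ - t₀ → t₁ - t₀ ≤ κ * ρ ^ 2 → closedBall c (4 * ρ) ×ˢ Icc t₀ t₁ ⊆ Q →
      (∀ x ∈ closedBall c (5 / 4 * ρ), ℓ ≤ J.val (x, t₀)) →
      ∀ x ∈ closedBall c (2 * ρ), C * ℓ ≤ J.val (x, t₁) := by
  obtain ⟨C, hC, hshrink⟩ := exists_mul_le_closedBall hm hν hκ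
  obtain ⟨H, hgap, hH⟩ := ((eventually_mul_le_barrierGap (n := n) (m := m) hν
    (show (0 : ℝ) < 4 * (m + 1) by positivity) (show (0 : ℝ) < 1 / 8 by norm_num)
    (18 / κ + 1)).and (Filter.eventually_ge_atTop 8)).exists
  have : 0 < H := by linarith
  refine ⟨Real.exp (-H) * C, by positivity,
    fun {β J Q c ρ t₀ t₁ ℓ} hJ hρ hℓ ht₀ hT hT' hQ hstart x hx => ?_⟩
  have hρ₂ : 0 < κ / 2 * ρ ^ 2 := by positivity
  have hT₀ : 0 < t₁ - t₀ := hρ₂.trans_le hT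
  have hlin : ∀ t ∈ Icc t₀ t₁, -H + H / (t₁ - t₀) * (t - t₀) ≤ 0 := fun t ht => by
    have hle : H / (t₁ - t₀) * (t - t₀) ≤ H / (t₁ - t₀) * (t₁ - t₀) := by gcongr; exact ht.2
    rw [div_mul_cancel₀ _ hT₀.ne'] at hle
    linarith
  rw [mul_assoc]
  refine hJ.exp_neg_mul_le (g₀ := -H) (g₁ := H / (t₁ - t₀)) (η := H / (3 * ρ) ^ 2) (ρ := 3 * ρ)
    (c := c) hm hν hH (by positivity) (by positivity) ht₀ (by linarith) (by positivity) ?_ ?_ hlin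
    ?_ ?_ x (closedBall_subset_closedBall (by linarith) hx)
  · rwa [show 4 / 3 * (3 * ρ) = 4 * ρ by ring]
  · intro z hz
    have hz' : z ∈ closedBall c (4 * ρ) := closedBall_subset_closedBall (by linarith) hz
    exact le_add_of_nonneg_left (hJ.nonneg _ (hQ ⟨hz', left_mem_Icc.2 (by linarith)⟩))
  · rw [div_mul_cancel₀ _ hT₀.ne']
    linarith
  · intro ξ hξ X hX hle
    by_cases hnear : ‖ξ - X.1‖ ≤ 3 * ρ / 8
    · left
      have hX₁ : X.1 ∈ closedBall c (11 / 16 * ρ) := by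
        rw [← dist_eq_norm] at hnear
        rw [mem_closedBall]
        linarith [dist_triangle_left X.1 c ξ, mem_ball.1 hξ]
      have hval : C * ℓ ≤ J.val (X.1, X.2) := hshrink hJ hρ hℓ ht₀ hX.2.1.le
        (by linarith [hX.2.2]) ((prod_mono (closedBall_subset_closedBall (by linarith))
          (Icc_subset_Icc_right hX.2.2)).trans hQ) hstart X.1 hX₁
      have hexp : Real.exp (-H + H / (t₁ - t₀) * (X.2 - t₀)) ≤ 1 :=
        Real.exp_le_one_iff.2 (hlin X.2 (Ioc_subset_Icc_self hX.2))
      calc _ ≤ 1 * (C * ℓ) := by gcongr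
        _ ≤ J.val X + Real.exp (-H) * (C * ℓ) := by
          rw [one_mul]
          exact hval.trans (le_add_of_nonneg_right (by positivity))
    · right
      exact add_le_barrierGap_of_le hκ (by linarith) hρ hT (not_le.1 hnear).le hle hgap

end Propagation

section Chain

variable {ν κ : ℝ} {S : NNReal} {m : ℕ}

lemma exists_pow_mul_le_closedBall (hm : IsLargeExponent ν S n m) (hν : 0 < ν) (hκ : 0 < κ) :
    ∃ C > 0, ∀ {β : En n → ℝ≥0∞} {J : Jet (En n)} {Q : Set (En n × ℝ)} {e w : En n} {ρ T ℓ : ℝ},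
      IsSupersolution ν S β J Q → 0 < ρ → 0 < ℓ → κ / 2 * ρ ^ 2 ≤ T → T ≤ κ * ρ ^ 2 →
      ‖w‖ ≤ 3 / 4 * ρ → (∀ x ∈ closedBall e (5 / 4 * ρ), ℓ ≤ J.val (x, 0)) → ∀ k : ℕ,
      (∀ j < k, closedBall (e + (j : ℝ) • w) (4 * ρ) ×ˢ Icc (j * T) ((j + 1) * T) ⊆ Q) →
      ∀ x ∈ closedBall (e + (k : ℝ) • w) (5 / 4 * ρ), C ^ k * ℓ ≤ J.val (x, k * T) := by
  obtain ⟨C, hC, hspread⟩ := exists_mul_le_closedBall_two_mul hm hν hκ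
  refine ⟨C, hC, fun {β J Q e w ρ T ℓ} hJ hρ hℓ hT hT' hw hstart k => ?_⟩
  have hT₀ : 0 < T := lt_of_lt_of_le (by positivity) hT
  induction k with
  | zero => simpa using hstart
  | succ k ih =>
    intro hQ x hx
    have hstep : ((k : ℝ) + 1) * T - k * T = T := by ring
    have hcentre : dist (e + ((k : ℝ) + 1) • w) (e + (k : ℝ) • w) = ‖w‖ := by
      rw [dist_add_left, add_smul, one_smul, dist_self_add_left]
    rw [Nat.cast_add_one] at hx ⊢
    rw [pow_succ', mul_assoc]
    refine hspread (c := e + (k : ℝ) • w) (t₀ := k * T) hJ hρ (by positivity) (by positivity)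
      (by rwa [hstep]) (by rwa [hstep]) (hQ k k.lt_succ_self)
      (ih fun j hj => hQ j (hj.trans k.lt_succ_self)) x (closedBall_subset_closedBall' ?_ hx)
    linarith

end Chain

section SlantedCylinder

variable {y e : En n} {s r K ρ : ℝ}

/-- The slanted cylinder together with its bottom. Its top is left out, since the equation is not
known to hold there. -/
def slantCylBelow (y : En n) (s r : ℝ) : Set (En n × ℝ) :=
  {X | ‖X.1 - (X.2 / s) • y‖ < r ∧ 0 ≤ X.2 ∧ X.2 < s}

lemma isOpen_slantCyl (Y : En n × ℝ) (r : ℝ) : IsOpen (slantCyl Y r) :=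
  (isOpen_lt (f := fun X : En n × ℝ => ‖X.1 - (X.2 / Y.2) • Y.1‖) (by fun_prop)
    continuous_const).inter
    ((isOpen_lt continuous_const continuous_snd).inter (isOpen_lt continuous_snd continuous_const))

lemma tendsto_slant {F : Filter ℝ} {t : ℝ} (hF : F ≤ nhds t) (e y : En n) (s : ℝ) :
    Filter.Tendsto (fun τ : ℝ => (e + (τ / s) • y, τ)) F (nhds (e + (t / s) • y, t)) := by
  have hcont : Continuous fun τ : ℝ => (e + (τ / s) • y, τ) := by fun_prop
  exact (hcont.tendsto t).mono_left hF

lemma slantCylBelow_subset_closure : slantCylBelow y s r ⊆ closure (slantCyl (y, s) r) := by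
  rintro ⟨x, t⟩ ⟨hx, ht₀, hts⟩
  have hlim := tendsto_slant (F := nhdsWithin t (Ioi t)) nhdsWithin_le_nhds (x - (t / s) • y) y s
  rw [sub_add_cancel] at hlim
  refine mem_closure_of_tendsto hlim ?_
  filter_upwards [Ioo_mem_nhdsGT hts] with τ hτ
  exact ⟨by simpa using hx, lt_of_le_of_lt ht₀ hτ.1, hτ.2⟩

lemma tendsto_slant_top (hs : 0 < s) (he : ‖e‖ < r) :
    Filter.Tendsto (fun τ : ℝ => (e + (τ / s) • y, τ)) (nhdsWithin s (Iio s))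
      (nhdsWithin (e + y, s) (slantCyl (y, s) r)) := by
  have hlim := tendsto_slant (F := nhdsWithin s (Iio s)) nhdsWithin_le_nhds e y s
  rw [div_self hs.ne', one_smul] at hlim
  refine tendsto_nhdsWithin_iff.2 ⟨hlim, ?_⟩
  filter_upwards [Ioo_mem_nhdsLT hs] with τ hτ
  exact ⟨by simpa using he, hτ.1, hτ.2⟩

lemma closedBall_prod_Icc_subset_slantCylBelow {τ₀ τ₁ : ℝ} (hs : 0 < s) (he : ‖e‖ < r / 2)
    (hρ : 9 * ρ ≤ r) (hτ₀ : 0 ≤ τ₀) (hτ₁ : τ₁ < s) (hτ : (τ₁ - τ₀) / s * ‖y‖ ≤ ρ / 2) :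
    closedBall (e + (τ₀ / s) • y) (4 * ρ) ×ˢ Icc τ₀ τ₁ ⊆ slantCylBelow y s r := by
  rintro ⟨x, τ⟩ ⟨hx, hτ'⟩
  refine ⟨?_, hτ₀.trans hτ'.1, hτ'.2.trans_lt hτ₁⟩
  have hdrift : ‖((τ - τ₀) / s) • y‖ ≤ ρ / 2 := by
    rw [norm_smul, Real.norm_of_nonneg (div_nonneg (sub_nonneg.2 hτ'.1) hs.le)]
    exact le_trans (by gcongr; exact hτ'.2) hτ
  have hsplit : x - (τ / s) • y = (x - (e + (τ₀ / s) • y)) + (e - ((τ - τ₀) / s) • y) := by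
    rw [sub_div, sub_smul]
    abel
  rw [mem_closedBall, dist_eq_norm] at hx
  calc ‖x - (τ / s) • y‖ ≤ ‖x - (e + (τ₀ / s) • y)‖ + (‖e‖ + ‖((τ - τ₀) / s) • y‖) := by
        rw [hsplit]
        exact (norm_add_le _ _).trans (by gcongr; exact norm_sub_le _ _)
    _ < r := by linarith

lemma exists_eq_mul_sq (hK : 0 < K) (hs : 0 < s) (hr : 0 < r) (hy : K⁻¹ * r * ‖y‖ ≤ s)
    (hsr : s ≤ K * r ^ 2) :
    ∃ ρ > 0, s = 81 * K * ρ ^ 2 ∧ 9 * ρ ≤ r ∧ ‖y‖ ≤ 9 * K ^ 2 * ρ := by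
  set σ := √(s / K)
  have hσ : 0 < σ := by positivity
  have hsσ : s = K * σ ^ 2 := by rw [Real.sq_sqrt (by positivity), mul_div_cancel₀ _ hK.ne']
  have hσr : σ ≤ r := Real.sqrt_le_iff.2 ⟨hr.le, (div_le_iff₀' hK).2 hsr⟩
  refine ⟨σ / 9, by positivity, by rw [hsσ]; ring, by linarith, ?_⟩
  have hσy : σ * ‖y‖ ≤ σ * (K ^ 2 * σ) := calc
    σ * ‖y‖ ≤ r * ‖y‖ := by gcongr
    _ = K * (K⁻¹ * r * ‖y‖) := by field_simp
    _ ≤ K * (K * σ ^ 2) := by rw [← hsσ]; gcongr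
    _ = σ * (K ^ 2 * σ) := by ring
  linarith [le_of_mul_le_mul_left hσy hσ]

/- The axis of the cylinder is followed by `k ≥ 18 K²` equal steps, so many that in each of them
it moves by at most `ρ / 2`. -/
lemma exists_mul_le_slantCylBelow {ν : ℝ} (hν : 0 < ν) (S : NNReal) (hK : 0 < K) :
    ∃ C > 0, ∀ {β : En n → ℝ≥0∞} {J : Jet (En n)} {y : En n} {s r ℓ : ℝ}, 0 < s → 0 < r → 0 < ℓ →
      K⁻¹ * r * ‖y‖ ≤ s → s ≤ K * r ^ 2 → IsSupersolution ν S β J (slantCylBelow y s r) →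
      (∀ x ∈ ball 0 r, ℓ ≤ J.val (x, 0)) → ∀ e : En n, ‖e‖ < r / 2 → ∀ t ∈ Ico (s / 2) s,
      C * ℓ ≤ J.val (e + (t / s) • y, t) := by
  obtain ⟨m, hm⟩ := exists_isLargeExponent ν S n
  obtain ⟨k, hk⟩ := exists_nat_ge (max 1 (18 * K ^ 2))
  obtain ⟨hk₁, hkK⟩ := max_le_iff.1 hk
  have hk₀ : (0 : ℝ) < k := by linarith
  obtain ⟨C, hC, hchain⟩ := exists_pow_mul_le_closedBall hm hν (show 0 < 81 * K / k by positivity)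
  refine ⟨C ^ k, by positivity, fun {β J y s r ℓ} hs hr hℓ hy hsr hJ hstart e he t ht => ?_⟩
  obtain ⟨ρ, hρ, hsρ, hρr, hyρ⟩ := exists_eq_mul_sq hK hs hr hy hsr
  set T := t / k
  have hT : 0 < T := div_pos (by linarith [ht.1]) hk₀
  have hTs : T ≤ s / k := div_le_div_of_nonneg_right ht.2.le hk₀.le
  have hkT : k * T = t := mul_div_cancel₀ _ hk₀.ne'
  have hκρ : 81 * K / k * ρ ^ 2 = s / k := by rw [hsρ]; ring
  have hdrift : T / s * ‖y‖ ≤ ρ / 2 := calc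
    T / s * ‖y‖ ≤ s / k / s * (9 * K ^ 2 * ρ) := by gcongr
    _ = 18 * K ^ 2 / k * (ρ / 2) := by field_simp; ring
    _ ≤ 1 * (ρ / 2) := by gcongr; exact (div_le_one hk₀).2 hkK
    _ = ρ / 2 := one_mul _
  have haxis : ∀ j : ℝ, j • (T / s) • y = (j * T / s) • y := fun j => by
    rw [smul_smul, mul_div_assoc]
  have hend := hchain (e := e) (w := (T / s) • y) (T := T) hJ hρ hℓ ?_ ?_ ?_ ?_ k ?_
    (e + (k : ℝ) • (T / s) • y) (mem_closedBall_self (by positivity))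
  · rwa [haxis, hkT] at hend
  · rw [div_mul_eq_mul_div, hκρ, div_right_comm]
    exact div_le_div_of_nonneg_right ht.1 hk₀.le
  · rwa [hκρ]
  · rw [norm_smul, Real.norm_of_nonneg (by positivity)]
    linarith
  · exact fun x hx => hstart x (closedBall_subset_ball' (by rw [dist_zero_right]; linarith) hx)
  · intro j hj
    have hjk : ((j : ℝ) + 1) * T ≤ k * T := by gcongr; exact_mod_cast hj
    rw [haxis]
    refine closedBall_prod_Icc_subset_slantCylBelow hs he hρr (by positivity)
      (by linarith [ht.2]) ?_
    rwa [show ((j : ℝ) + 1) * T - j * T = T by ring]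

end SlantedCylinder

section Equation

variable {ν : ℝ} {u : En n × ℝ → ℝ} {a : En n × ℝ → Matrix (Fin n) (Fin n) ℝ}
  {b : En n × ℝ → En n} {Q : Set (En n × ℝ)} {X : En n × ℝ}

/-- The jet of `u`, its Hessian taken as the derivative of the gradient assembled from the partial
derivatives `Dx`, so that it is regular wherever `u` is of class `IsC21`. -/
def Jet.ofFun (u : En n × ℝ → ℝ) : Jet (En n) where
  val := u
  timeDeriv := Dt u
  grad X := WithLp.toLp 2 fun i => Dx u i X
  hess X := fderiv ℝ (fun x => WithLp.toLp 2 fun i => Dx u i (x, X.2)) X.1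

lemma IsC21.mono {Q' : Set (En n × ℝ)} (hu : IsC21 u Q) (hQ : Q' ⊆ Q) : IsC21 u Q' where
  cont := hu.cont.mono hQ
  diff_t X hX := hu.diff_t X (hQ hX)
  diff_x X hX := hu.diff_x X (hQ hX)
  diff_xx j X hX := hu.diff_xx j X (hQ hX)
  cont_t := hu.cont_t.mono hQ
  cont_x i := (hu.cont_x i).mono hQ
  cont_xx i j := (hu.cont_xx i j).mono hQ

lemma innerSL_grad_ofFun (u : En n × ℝ → ℝ) (X : En n × ℝ) :
    innerSL ℝ ((Jet.ofFun u).grad X) = fderiv ℝ (fun x => u (x, X.2)) X.1 := by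
  refine ContinuousLinearMap.coe_injective
    ((EuclideanSpace.basisFun (Fin n) ℝ).toBasis.ext fun i => ?_)
  simp [Jet.ofFun, Dx, EuclideanSpace.inner_single_right]

lemma IsC21.hasFDerivAt_grad_ofFun (hu : IsC21 u Q) (hX : X ∈ Q) :
    HasFDerivAt (fun x => (Jet.ofFun u).grad (x, X.2)) ((Jet.ofFun u).hess X) X.1 :=
  (differentiableAt_euclidean.2 fun j => hu.diff_xx j X hX).hasFDerivAt

lemma IsC21.isRegularOn_ofFun (hu : IsC21 u Q) : (Jet.ofFun u).IsRegularOn Q where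
  hasFDerivAt_val X hX := by
    rw [innerSL_grad_ofFun]
    exact (hu.diff_x X hX).hasFDerivAt
  hasFDerivAt_grad X hX := hu.hasFDerivAt_grad_ofFun hX
  hasDerivAt_val X hX := (hu.diff_t X hX).hasDerivAt
  continuousOn_val := hu.cont
  continuousOn_timeDeriv := hu.cont_t

lemma IsC21.hess_ofFun_single (hu : IsC21 u Q) (hX : X ∈ Q) (i j : Fin n) :
    (Jet.ofFun u).hess X (EuclideanSpace.single i 1) j = Dxx u i j X := by
  have hproj : HasFDerivAt (fun x => Dx u j (x, X.2))
      ((EuclideanSpace.proj j : En n →L[ℝ] ℝ).comp ((Jet.ofFun u).hess X)) X.1 :=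
    (EuclideanSpace.proj j : En n →L[ℝ] ℝ).hasFDerivAt.comp X.1 (hu.hasFDerivAt_grad_ofFun hX)
  rw [Dxx, Dx, hproj.fderiv]
  rfl

lemma IsC21.continuousOn_grad_ofFun (hu : IsC21 u Q) : ContinuousOn (Jet.ofFun u).grad Q :=
  (PiLp.continuous_toLp 2 _).comp_continuousOn (continuousOn_pi.2 hu.cont_x)

lemma IsC21.continuousOn_hess_ofFun (hu : IsC21 u Q) : ContinuousOn (Jet.ofFun u).hess Q := by
  refine continuousOn_clm_apply.2 fun v => ?_
  have hcol : ∀ i, ContinuousOn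
      (fun X => (Jet.ofFun u).hess X (EuclideanSpace.single i 1)) Q := fun i =>
    ((PiLp.continuous_toLp 2 _).comp_continuousOn (continuousOn_pi.2 (hu.cont_xx i))).congr
      fun X hX => PiLp.ext (hu.hess_ofFun_single hX i)
  have hexpand : ∀ X, (Jet.ofFun u).hess X v =
      ∑ i, v i • (Jet.ofFun u).hess X (EuclideanSpace.single i 1) := fun X => by
    conv_lhs => rw [← (EuclideanSpace.basisFun (Fin n) ℝ).sum_repr v, map_sum]
    simp
  simp only [hexpand]
  exact continuousOn_finsetSum _ fun i _ => (hcol i).const_smul (v i)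

lemma IsC21.lop_eq (hu : IsC21 u Q) (hX : X ∈ Q) :
    Lop a b u X =
      traceMul (a X) ((Jet.ofFun u).hess X) + ⟪b X, (Jet.ofFun u).grad X⟫ := by
  simp only [Lop, traceMul_apply, hu.hess_ofFun_single hX]
  simp [Jet.ofFun, PiLp.inner_apply, mul_comm]

lemma IsElliptic.pucciLE {A : Matrix (Fin n) (Fin n) ℝ} (hA : IsElliptic ν A) {β : ℝ≥0∞} {p : ℝ}
    {v q : En n} {M : En n →L[ℝ] En n} (hpde : -p + (traceMul A M + ⟪v, q⟫) ≤ 0)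
    (hv : β ≠ ∞ → (‖v‖₊ : ℝ≥0∞) ≤ β) : PucciLE ν β p q M := by
  intro hβ
  refine ⟨A, hA, ?_⟩
  have hdrift : -(β.toReal * ‖q‖) ≤ ⟪v, q⟫ := by
    rcases hβ with hβ | rfl
    · have hv' : ‖v‖ ≤ β.toReal := by simpa using ENNReal.toReal_mono hβ (hv hβ)
      calc -(β.toReal * ‖q‖) ≤ -(‖v‖ * ‖q‖) := by gcongr
        _ ≤ ⟪v, q⟫ := (abs_le.1 (abs_real_inner_le_norm v q)).1
    · simp
  linarith

/-- `ess sup_t |b (x, t)|` over the times `t` with `(x, t) ∈ Q`, the integrand of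
`LxnLtinfPow`. -/
def driftBound (b : En n × ℝ → En n) (Q : Set (En n × ℝ)) (x : En n) : ℝ≥0∞ :=
  essSup (fun t => (‖b (x, t)‖₊ : ℝ≥0∞)) (volume.restrict {t | (x, t) ∈ Q})

lemma frequently_le_driftBound (b : En n × ℝ → En n) (hQ : IsOpen Q) (hX : X ∈ Q) :
    ∃ᶠ t in nhds X.2, (X.1, t) ∈ Q ∧ (‖b (X.1, t)‖₊ : ℝ≥0∞) ≤ driftBound b Q X.1 := by
  have hslice : IsOpen {t | (X.1, t) ∈ Q} := hQ.preimage (by fun_prop)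
  have hae := (ae_restrict_iff' hslice.measurableSet).1
    (ENNReal.ae_le_essSup (μ := volume.restrict {t | (X.1, t) ∈ Q})
      fun t => (‖b (X.1, t)‖₊ : ℝ≥0∞))
  exact (mem_closure_iff_frequently.1 ((Measure.dense_of_ae hae).open_subset_closure_inter hslice
    hX)).mono fun t ht => ⟨ht.1, ht.2 ht.1⟩

/- Only almost every time satisfies the bound on the drift, and these times accumulate at every
time; since the ellipticity class is compact, the inequality passes to the limit. -/
lemma pucciLE_of_neg_dt_add_lop_nonpos (hQ : IsOpen Q) (hu : IsC21 u Q) (ha : UnifParabolic ν a Q)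
    (hpde : ∀ X ∈ Q, -Dt u X + Lop a b u X ≤ 0) (hX : X ∈ Q) :
    PucciLE ν (driftBound b Q X.1) (Dt u X) ((Jet.ofFun u).grad X) ((Jet.ofFun u).hess X) := by
  have hpoint : ∀ Z ∈ Q,
      -Dt u Z + (traceMul (a Z) ((Jet.ofFun u).hess Z) + ⟪b Z, (Jet.ofFun u).grad Z⟫) ≤ 0 :=
    fun Z hZ => by simpa only [hu.lop_eq hZ] using hpde Z hZ
  by_cases hβ : driftBound b Q X.1 = ∞
  · exact IsElliptic.pucciLE (ha X hX) (hpoint X hX) fun hβ' => (hβ' hβ).elim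
  have htime : Filter.Tendsto (fun t => (X.1, t)) (nhds X.2) (nhds X) :=
    (Continuous.prodMk_right X.1).tendsto X.2
  have hjet := (hu.cont_t.prodMk (hu.continuousOn_grad_ofFun.prodMk
    hu.continuousOn_hess_ofFun)).continuousAt (hQ.mem_nhds hX)
  exact (isClosed_setOf_pucciLE ν hβ).mem_of_frequently_of_tendsto
    ((frequently_le_driftBound b hQ hX).mono fun t ht =>
      IsElliptic.pucciLE (ha _ ht.1) (hpoint _ ht.1) fun _ => ht.2) (hjet.tendsto.comp htime)

lemma isSupersolution_ofFun {y : En n} {s r : ℝ} {S : NNReal}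
    (hu : IsC21 u (closure (slantCyl (y, s) r))) (ha : UnifParabolic ν a (slantCyl (y, s) r))
    (hb : LxnLtinfPow b (slantCyl (y, s) r) ≤ S)
    (hpde : ∀ X ∈ slantCyl (y, s) r, -Dt u X + Lop a b u X ≤ 0)
    (hpos : ∀ X ∈ slantCyl (y, s) r, 0 < u X) :
    IsSupersolution ν S (driftBound b (slantCyl (y, s) r)) (Jet.ofFun u)
      (slantCylBelow y s r) where
  toIsRegularOn := (hu.mono slantCylBelow_subset_closure).isRegularOn_ofFun
  nonneg _ hX := le_on_closure (fun Z hZ => (hpos Z hZ).le) continuousOn_const hu.cont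
    (slantCylBelow_subset_closure hX)
  pucciLE _ hX ht := pucciLE_of_neg_dt_add_lop_nonpos (isOpen_slantCyl _ r) (hu.mono subset_closure)
    ha hpde ⟨hX.1, ht, hX.2.2⟩
  lintegral_le := hb

end Equation

/-- **Lower bound along a slanted cylinder** (Lemma 3.3). -/
theorem slanted_cylinder_lower_bound
    (n : ℕ) (hn : 0 < n) (ν S K : ℝ) (hν : 1 ≤ ν) (hK : 0 < K) :
    ∃ C : ℝ, 0 < C ∧
      ∀ (y : En n) (s r ℓ : ℝ) (u : En n × ℝ → ℝ)
        (a : En n × ℝ → Matrix (Fin n) (Fin n) ℝ) (b : En n × ℝ → En n),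
        0 < s → 0 < r → 0 < ℓ →
        K⁻¹ * r * ‖y‖ ≤ s → s ≤ K * r ^ 2 →
        IsC21 u (closure (slantCyl (y, s) r)) →
        UnifParabolic ν a (slantCyl (y, s) r) →
        LxnLtinfPow b (slantCyl (y, s) r) ≤ ENNReal.ofReal S →
        (∀ X ∈ slantCyl (y, s) r, -Dt u X + Lop a b u X ≤ 0) →
        (∀ X ∈ slantCyl (y, s) r, 0 < u X) →
        (∀ x ∈ ball (0 : En n) r, ℓ ≤ u (x, 0)) →
        (∀ x ∈ ball y (r / 2), C * ℓ ≤ u (x, s)) ∧ C * ℓ ≤ u (y, s) := by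
  obtain ⟨C, hC, hbelow⟩ :=
    exists_mul_le_slantCylBelow (n := n) (zero_lt_one.trans_le hν) S.toNNReal hK
  refine ⟨C, hC, fun y s r ℓ u a b hs hr hℓ hy hsr hu ha hb hpde hpos hbottom => ?_⟩
  suffices htop : ∀ x ∈ ball y (r / 2), C * ℓ ≤ u (x, s) from
    ⟨htop, htop y (mem_ball_self (half_pos hr))⟩
  intro x hx
  have hJ := isSupersolution_ofFun hu ha hb hpde hpos
  have he : ‖x - y‖ < r / 2 := mem_ball_iff_norm.1 hx
  have hlim := tendsto_slant_top (y := y) hs (he.trans (half_lt_self hr))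
  rw [sub_add_cancel] at hlim
  have htop : (x, s) ∈ closure (slantCyl (y, s) r) := mem_closure_iff_nhdsWithin_neBot.2 hlim.neBot
  refine ge_of_tendsto (((hu.cont _ htop).mono subset_closure).tendsto.comp hlim) ?_
  filter_upwards [Ico_mem_nhdsLT (half_lt_self hs)] with t ht
  exact hbelow hs hr hℓ hy hsr hJ hbottom (x - y) he t ht
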